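/- arXiv:2209.04225 — 2 statements merged into one kernel-verified Lean document; each statement's English description precedes it below -/
import Mathlib

section
/- Let 1 < p < Q, let a, b ∈ ℝ, set λ = a + b, and assume Q ≠ 1 + λ. Then for every smooth compactly supported function f on ℍⁿ \ {0} one has |(Q − 1 − λ)/p| · ∫_{ℍⁿ} (|z|^p/d^p) · (|f|^p/d^{λ+1}) dξ ≤ (∫_{ℍⁿ} |∇_H f|^p / d^{ap} dξ)^{1/p} · (∫_{ℍⁿ} (|z|^p/d^p) · (|f|^p/d^{bq}) dξ)^{1/q}, where 1/p + 1/q = 1. -/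
open MeasureTheory Real

noncomputable section

/-- The underlying space of the Heisenberg group `ℍⁿ = ℝⁿ × ℝⁿ × ℝ`,
with points `ξ = (x, y, t)` and `z = (x, y)`. -/
abbrev Heis (n : ℕ) : Type := (Fin n → ℝ) × (Fin n → ℝ) × ℝ

/-- The left-invariant horizontal vector field `X_j = ∂/∂x_j + 2 y_j ∂/∂t`. -/
noncomputable def XH {n : ℕ} (j : Fin n) (f : Heis n → ℝ) (ξ : Heis n) : ℝ :=
  fderiv ℝ f ξ (Pi.single j 1, 0, 0) + 2 * ξ.2.1 j * fderiv ℝ f ξ (0, 0, 1)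

/-- The left-invariant horizontal vector field `Y_j = ∂/∂y_j − 2 x_j ∂/∂t`. -/
noncomputable def YH {n : ℕ} (j : Fin n) (f : Heis n → ℝ) (ξ : Heis n) : ℝ :=
  fderiv ℝ f ξ (0, Pi.single j 1, 0) - 2 * ξ.1 j * fderiv ℝ f ξ (0, 0, 1)

/-- The horizontal gradient `∇_H f = (X_1 f, …, X_n f, Y_1 f, …, Y_n f)`. -/
noncomputable def hGrad {n : ℕ} (f : Heis n → ℝ) (ξ : Heis n) : (Fin n → ℝ) × (Fin n → ℝ) :=
  (fun j => XH j f ξ, fun j => YH j f ξ)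

/-- Euclidean length of a horizontal vector. -/
noncomputable def hNorm {n : ℕ} (v : (Fin n → ℝ) × (Fin n → ℝ)) : ℝ :=
  Real.sqrt (∑ j, v.1 j ^ 2 + ∑ j, v.2 j ^ 2)

/-- Euclidean inner product of horizontal vectors. -/
noncomputable def hDot {n : ℕ} (v w : (Fin n → ℝ) × (Fin n → ℝ)) : ℝ :=
  ∑ j, v.1 j * w.1 j + ∑ j, v.2 j * w.2 j

/-- The horizontal divergence `div_H w = Σ_j (X_j w_j + Y_j w_{n+j})`. -/
noncomputable def hDiv {n : ℕ} (V : Heis n → (Fin n → ℝ) × (Fin n → ℝ)) (ξ : Heis n) : ℝ :=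
  ∑ j, (XH j (fun η => (V η).1 j) ξ + YH j (fun η => (V η).2 j) ξ)

/-- The sub-Laplacian `Δ_H = Σ_j (X_j² + Y_j²) = div_H ∘ ∇_H`. -/
noncomputable def hLap {n : ℕ} (f : Heis n → ℝ) : Heis n → ℝ :=
  hDiv (hGrad f)

/-- The `p`-sub-Laplacian `Δ_{H,p} f = div_H (|∇_H f|^{p−2} ∇_H f)`. -/
noncomputable def pLap {n : ℕ} (p : ℝ) (f : Heis n → ℝ) : Heis n → ℝ :=
  hDiv (fun ξ => hNorm (hGrad f ξ) ^ (p - 2) • hGrad f ξ)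

/-- The Euclidean norm `|z|` of the horizontal component `z = (x, y)`. -/
noncomputable def zNorm {n : ℕ} (ξ : Heis n) : ℝ :=
  Real.sqrt (∑ j, ξ.1 j ^ 2 + ∑ j, ξ.2.1 j ^ 2)

/-- The Heisenberg gauge `d(z, t) = (|z|⁴ + t²)^{1/4}`. -/
noncomputable def dH {n : ℕ} (ξ : Heis n) : ℝ :=
  ((∑ j, ξ.1 j ^ 2 + ∑ j, ξ.2.1 j ^ 2) ^ 2 + ξ.2.2 ^ 2) ^ (1 / 4 : ℝ)

/-- A smooth compactly supported function on `ℍⁿ \ {0}`. -/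
def IsTestAwayZero {n : ℕ} (f : Heis n → ℝ) : Prop :=
  ContDiff ℝ (⊤ : ℕ∞) f ∧ HasCompactSupport f ∧ (0 : Heis n) ∉ tsupport f

/-- `|z|²`. -/
def hS {n : ℕ} (ξ : Heis n) : ℝ := ∑ j, ξ.1 j ^ 2 + ∑ j, ξ.2.1 j ^ 2

/-- `d⁴`. -/
def hN {n : ℕ} (ξ : Heis n) : ℝ := hS ξ ^ 2 + ξ.2.2 ^ 2

/-- The regularized weight. -/
def hK {n : ℕ} (ε α β : ℝ) (ξ : Heis n) : ℝ := (hS ξ + ε) ^ α * (hN ξ + ε) ^ β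

lemma hS_nonneg {n : ℕ} (ξ : Heis n) : 0 ≤ hS ξ := by unfold hS; positivity

lemma hN_nonneg {n : ℕ} (ξ : Heis n) : 0 ≤ hN ξ := by unfold hN; positivity

lemma hS_contDiff {n : ℕ} : ContDiff ℝ 1 (hS (n := n)) := by
  unfold hS; fun_prop

lemma hN_contDiff {n : ℕ} : ContDiff ℝ 1 (hN (n := n)) := by
  have := hS_contDiff (n := n)
  unfold hN; fun_prop

lemma hN_pos {n : ℕ} {ξ : Heis n} (h : ξ ≠ 0) : 0 < hN ξ := by
  rcases (hN_nonneg ξ).lt_or_eq with h1 | h1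
  · exact h1
  exfalso
  apply h
  unfold hN at h1
  have h2 : ξ.2.2 = 0 := by nlinarith [sq_nonneg (hS ξ), sq_nonneg ξ.2.2]
  have h3 : hS ξ = 0 := by
    have : hS ξ ^ 2 = 0 := by nlinarith [sq_nonneg (hS ξ), sq_nonneg ξ.2.2]
    exact pow_eq_zero_iff (two_ne_zero) |>.1 this
  unfold hS at h3
  have hx : ∑ j, ξ.1 j ^ 2 = 0 := by
    have : 0 ≤ ∑ j, ξ.1 j ^ 2 := by positivity
    have : 0 ≤ ∑ j, ξ.2.1 j ^ 2 := by positivity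
    linarith
  have hy : ∑ j, ξ.2.1 j ^ 2 = 0 := by linarith
  rw [Finset.sum_eq_zero_iff_of_nonneg (fun _ _ => sq_nonneg _)] at hx hy
  ext j
  · simpa using hx j (Finset.mem_univ j)
  · simpa using hy j (Finset.mem_univ j)
  · exact h2

lemma hK_contDiff {n : ℕ} {ε : ℝ} (hε : 0 < ε) (α β : ℝ) : ContDiff ℝ 1 (hK (n := n) ε α β) := by
  unfold hK
  refine ContDiff.mul ?_ ?_
  · refine ContDiff.rpow_const_of_ne (hS_contDiff.add contDiff_const) fun ξ => ?_
    have := hS_nonneg ξ; positivity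
  · refine ContDiff.rpow_const_of_ne (hN_contDiff.add contDiff_const) fun ξ => ?_
    have := hN_nonneg ξ; positivity

instance heis_haar (n : ℕ) : (volume : Measure (Heis n)).IsAddHaarMeasure := by
  have h : (volume : Measure ((Fin n → ℝ) × ℝ)).IsAddHaarMeasure :=
    Measure.prod.instIsAddHaarMeasure (volume : Measure (Fin n → ℝ)) (volume : Measure ℝ)
  exact Measure.prod.instIsAddHaarMeasure (volume : Measure (Fin n → ℝ))
    (volume : Measure ((Fin n → ℝ) × ℝ))

lemma ibp_dir {n : ℕ} {u V : Heis n → ℝ} (hu : ContDiff ℝ 1 u) (hc : HasCompactSupport u)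
    (hV : ContDiff ℝ 1 V) (v : Heis n) :
    Integrable (fun ξ => u ξ * fderiv ℝ V ξ v) ∧ Integrable (fun ξ => fderiv ℝ u ξ v * V ξ) ∧
    ∫ ξ, u ξ * fderiv ℝ V ξ v = - ∫ ξ, fderiv ℝ u ξ v * V ξ := by
  have hu' : Continuous (fun ξ => fderiv ℝ u ξ v) :=
    (hu.continuous_fderiv one_ne_zero).clm_apply continuous_const
  have hV' : Continuous (fun ξ => fderiv ℝ V ξ v) :=
    (hV.continuous_fderiv one_ne_zero).clm_apply continuous_const
  have hc' : HasCompactSupport (fun ξ => fderiv ℝ u ξ v) := hc.fderiv_apply ℝ v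
  have i1 : Integrable (fun ξ => u ξ * fderiv ℝ V ξ v) :=
    (hu.continuous.mul hV').integrable_of_hasCompactSupport hc.mul_right
  have i2 : Integrable (fun ξ => fderiv ℝ u ξ v * V ξ) :=
    (hu'.mul hV.continuous).integrable_of_hasCompactSupport hc'.mul_right
  have i3 : Integrable (fun ξ => u ξ * V ξ) :=
    (hu.continuous.mul hV.continuous).integrable_of_hasCompactSupport hc.mul_right
  refine ⟨i1, i2, ?_⟩
  exact integral_mul_fderiv_eq_neg_fderiv_mul_of_integrable i2 i1 i3
    (fun x _ => hu.differentiable one_ne_zero x) (fun x _ => hV.differentiable one_ne_zero x)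

/-- integration by parts along a field `v + ℓ ∂_t`, with `ℓ` linear not depending on `t`. -/
lemma ibp_field {n : ℕ} {u V : Heis n → ℝ} (hu : ContDiff ℝ 1 u) (hc : HasCompactSupport u)
    (hV : ContDiff ℝ 1 V) (v : Heis n) (l : Heis n →L[ℝ] ℝ) (hl : l (0, 0, 1) = 0) :
    Integrable (fun ξ => u ξ * (fderiv ℝ V ξ v + l ξ * fderiv ℝ V ξ (0, 0, 1))) ∧
    Integrable (fun ξ => (fderiv ℝ u ξ v + l ξ * fderiv ℝ u ξ (0, 0, 1)) * V ξ) ∧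
    ∫ ξ, u ξ * (fderiv ℝ V ξ v + l ξ * fderiv ℝ V ξ (0, 0, 1)) =
      - ∫ ξ, (fderiv ℝ u ξ v + l ξ * fderiv ℝ u ξ (0, 0, 1)) * V ξ := by
  obtain ⟨a1, a2, a3⟩ := ibp_dir hu hc hV v
  have hlV : ContDiff ℝ 1 (fun ξ => l ξ * V ξ) := l.contDiff.mul hV
  obtain ⟨b1, b2, b3⟩ := ibp_dir hu hc hlV (0, 0, 1)
  have e : ∀ ξ, fderiv ℝ (fun ξ => l ξ * V ξ) ξ (0, 0, 1) = l ξ * fderiv ℝ V ξ (0, 0, 1) := by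
    intro ξ
    rw [fderiv_fun_mul l.differentiableAt (hV.differentiable one_ne_zero ξ)]
    simp [hl]
  simp only [e] at b1 b3
  have e1 : (fun ξ => u ξ * (fderiv ℝ V ξ v + l ξ * fderiv ℝ V ξ (0, 0, 1))) =
    fun ξ => u ξ * fderiv ℝ V ξ v + u ξ * (l ξ * fderiv ℝ V ξ (0, 0, 1)) := by
    funext ξ; ring
  have e2 : (fun ξ => (fderiv ℝ u ξ v + l ξ * fderiv ℝ u ξ (0, 0, 1)) * V ξ) =
    fun ξ => fderiv ℝ u ξ v * V ξ + fderiv ℝ u ξ (0, 0, 1) * (l ξ * V ξ) := by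
    funext ξ; ring
  rw [e1, e2]
  refine ⟨a1.add b1, a2.add b2, ?_⟩
  rw [integral_add a1 b1, integral_add a2 b2, a3, b3]; ring

lemma ibp_X {n : ℕ} {u V : Heis n → ℝ} (hu : ContDiff ℝ 1 u) (hc : HasCompactSupport u)
    (hV : ContDiff ℝ 1 V) (j : Fin n) :
    Integrable (fun ξ => u ξ * XH j V ξ) ∧ Integrable (fun ξ => XH j u ξ * V ξ) ∧
    ∫ ξ, u ξ * XH j V ξ = - ∫ ξ, XH j u ξ * V ξ := by
  have := ibp_field hu hc hV (Pi.single j 1, 0, 0)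
    ((2 : ℝ) • ((ContinuousLinearMap.proj j).comp ((ContinuousLinearMap.fst ℝ _ _).comp
      (ContinuousLinearMap.snd ℝ (Fin n → ℝ) ((Fin n → ℝ) × ℝ))))) (by simp)
  simpa [XH] using this

lemma ibp_Y {n : ℕ} {u V : Heis n → ℝ} (hu : ContDiff ℝ 1 u) (hc : HasCompactSupport u)
    (hV : ContDiff ℝ 1 V) (j : Fin n) :
    Integrable (fun ξ => u ξ * YH j V ξ) ∧ Integrable (fun ξ => YH j u ξ * V ξ) ∧
    ∫ ξ, u ξ * YH j V ξ = - ∫ ξ, YH j u ξ * V ξ := by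
  have := ibp_field hu hc hV (0, Pi.single j 1, 0)
    ((-2 : ℝ) • ((ContinuousLinearMap.proj j).comp
      (ContinuousLinearMap.fst ℝ (Fin n → ℝ) ((Fin n → ℝ) × ℝ)))) (by simp)
  simpa [YH, sub_eq_add_neg] using this

lemma ibp_div {n : ℕ} {u : Heis n → ℝ} (hu : ContDiff ℝ 1 u) (hc : HasCompactSupport u)
    {V : Heis n → (Fin n → ℝ) × (Fin n → ℝ)}
    (hV1 : ∀ j, ContDiff ℝ 1 (fun ξ => (V ξ).1 j)) (hV2 : ∀ j, ContDiff ℝ 1 (fun ξ => (V ξ).2 j)) :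
    ∫ ξ, u ξ * hDiv V ξ = - ∫ ξ, hDot (hGrad u ξ) (V ξ) := by
  have hX := fun j => ibp_X hu hc (hV1 j) j
  have hY := fun j => ibp_Y hu hc (hV2 j) j
  simp only [hDiv, hDot, hGrad, Finset.mul_sum, ← Finset.sum_add_distrib, mul_add]
  rw [integral_finsetSum, integral_finsetSum, ← Finset.sum_neg_distrib]
  rotate_left
  · exact fun j _ => (hX j).2.1.add (hY j).2.1
  · exact fun j _ => (hX j).1.add (hY j).1
  refine Finset.sum_congr rfl fun j _ => ?_
  rw [integral_add (hX j).1 (hY j).1, integral_add (hX j).2.1 (hY j).2.1, (hX j).2.2, (hY j).2.2]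
  ring

/-- `¼ ∇_H d⁴`. -/
def hW {n : ℕ} (ξ : Heis n) : (Fin n → ℝ) × (Fin n → ℝ) :=
  (fun j => hS ξ * ξ.1 j + ξ.2.1 j * ξ.2.2, fun j => hS ξ * ξ.2.1 j - ξ.1 j * ξ.2.2)

/-- coordinate `x_j` -/
def cX {n : ℕ} (j : Fin n) : Heis n →L[ℝ] ℝ := (ContinuousLinearMap.proj j).comp
        (ContinuousLinearMap.fst ℝ (Fin n → ℝ) ((Fin n → ℝ) × ℝ))

/-- coordinate `y_j` -/
def cY {n : ℕ} (j : Fin n) : Heis n →L[ℝ] ℝ :=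
  (ContinuousLinearMap.proj j).comp ((ContinuousLinearMap.fst ℝ _ _).comp
      (ContinuousLinearMap.snd ℝ (Fin n → ℝ) ((Fin n → ℝ) × ℝ)))

/-- coordinate `t` -/
def cT {n : ℕ} : Heis n →L[ℝ] ℝ := (ContinuousLinearMap.snd ℝ _ _).comp
      (ContinuousLinearMap.snd ℝ (Fin n → ℝ) ((Fin n → ℝ) × ℝ))

lemma fderiv_hS {n : ℕ} (ξ w : Heis n) :
    fderiv ℝ hS ξ w = 2 * (∑ j, ξ.1 j * w.1 j + ∑ j, ξ.2.1 j * w.2.1 j) := by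
  have h1 : ∀ j, HasFDerivAt (fun η : Heis n => η.1 j) (cX j) ξ := fun j => (cX j).hasFDerivAt
  have h2 : ∀ j, HasFDerivAt (fun η : Heis n => η.2.1 j) (cY j) ξ := fun j => (cY j).hasFDerivAt
  have h : HasFDerivAt hS _ ξ :=
    (HasFDerivAt.fun_sum (u := Finset.univ) fun j _ => (h1 j).pow 2).add
    (HasFDerivAt.fun_sum (u := Finset.univ) fun j _ => (h2 j).pow 2)
  rw [h.fderiv]
  simp [mul_add, Finset.mul_sum, mul_assoc, cX, cY]

lemma fderiv_t {n : ℕ} (ξ w : Heis n) : fderiv ℝ (fun η : Heis n => η.2.2) ξ w = w.2.2 := by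
  have h2 : HasFDerivAt (fun η : Heis n => η.2.2) cT ξ := (cT (n := n)).hasFDerivAt
  rw [h2.fderiv]; rfl

lemma fderiv_x {n : ℕ} (j : Fin n) (ξ w : Heis n) :
    fderiv ℝ (fun η : Heis n => η.1 j) ξ w = w.1 j := by
  have h2 : HasFDerivAt (fun η : Heis n => η.1 j) (cX j) ξ := (cX j).hasFDerivAt
  rw [h2.fderiv]; rfl

lemma fderiv_y {n : ℕ} (j : Fin n) (ξ w : Heis n) :
    fderiv ℝ (fun η : Heis n => η.2.1 j) ξ w = w.2.1 j := by
  have h2 : HasFDerivAt (fun η : Heis n => η.2.1 j) (cY j) ξ := (cY j).hasFDerivAt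
  rw [h2.fderiv]; rfl

lemma fderiv_hN {n : ℕ} (ξ w : Heis n) :
    fderiv ℝ hN ξ w = 2 * hS ξ * fderiv ℝ hS ξ w + 2 * ξ.2.2 * w.2.2 := by
  have h1 : DifferentiableAt ℝ (hS (n := n)) ξ := hS_contDiff.differentiable one_ne_zero ξ
  have h2 : DifferentiableAt ℝ (fun η : Heis n => η.2.2) ξ := by fun_prop
  have h : HasFDerivAt hN _ ξ := (h1.hasFDerivAt.pow 2).add (h2.hasFDerivAt.pow 2)
  rw [h.fderiv]
  simp [fderiv_t]

lemma fderiv_hK {n : ℕ} {ε : ℝ} (hε : 0 < ε) (α β : ℝ) (ξ w : Heis n) :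
    fderiv ℝ (hK ε α β) ξ w =
      α * hK ε (α - 1) β ξ * fderiv ℝ hS ξ w + β * hK ε α (β - 1) ξ * fderiv ℝ hN ξ w := by
  have h1 : DifferentiableAt ℝ (hS (n := n)) ξ := hS_contDiff.differentiable one_ne_zero ξ
  have h2 : DifferentiableAt ℝ (hN (n := n)) ξ := hN_contDiff.differentiable one_ne_zero ξ
  have p1 : hS ξ + ε ≠ 0 := by have := hS_nonneg ξ; positivity
  have p2 : hN ξ + ε ≠ 0 := by have := hN_nonneg ξ; positivity
  have h : HasFDerivAt (hK ε α β) _ ξ :=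
    ((h1.hasFDerivAt.add_const ε).rpow_const (p := α) (Or.inl p1)).mul
    ((h2.hasFDerivAt.add_const ε).rpow_const (p := β) (Or.inl p2))
  rw [h.fderiv]
  simp [hK]
  ring

lemma fderiv_hW1 {n : ℕ} (j : Fin n) (ξ w : Heis n) :
    fderiv ℝ (fun η => (hW η).1 j) ξ w = fderiv ℝ hS ξ w * ξ.1 j + hS ξ * w.1 j
      + w.2.1 j * ξ.2.2 + ξ.2.1 j * w.2.2 := by
  have h1 : DifferentiableAt ℝ (hS (n := n)) ξ := hS_contDiff.differentiable one_ne_zero ξ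
  have h2 : DifferentiableAt ℝ (fun η : Heis n => η.2.2) ξ := by fun_prop
  have h3 : DifferentiableAt ℝ (fun η : Heis n => η.1 j) ξ := by fun_prop
  have h4 : DifferentiableAt ℝ (fun η : Heis n => η.2.1 j) ξ := by fun_prop
  have h : HasFDerivAt (fun η => (hW η).1 j) _ ξ :=
    (h1.hasFDerivAt.mul h3.hasFDerivAt).add (h4.hasFDerivAt.mul h2.hasFDerivAt)
  rw [h.fderiv]
  simp [fderiv_t, fderiv_x, fderiv_y]
  ring

lemma fderiv_hW2 {n : ℕ} (j : Fin n) (ξ w : Heis n) :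
    fderiv ℝ (fun η => (hW η).2 j) ξ w = fderiv ℝ hS ξ w * ξ.2.1 j + hS ξ * w.2.1 j
      - w.1 j * ξ.2.2 - ξ.1 j * w.2.2 := by
  have h1 : DifferentiableAt ℝ (hS (n := n)) ξ := hS_contDiff.differentiable one_ne_zero ξ
  have h2 : DifferentiableAt ℝ (fun η : Heis n => η.2.2) ξ := by fun_prop
  have h3 : DifferentiableAt ℝ (fun η : Heis n => η.1 j) ξ := by fun_prop
  have h4 : DifferentiableAt ℝ (fun η : Heis n => η.2.1 j) ξ := by fun_prop
  have h : HasFDerivAt (fun η => (hW η).2 j) _ ξ :=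
    (h1.hasFDerivAt.mul h4.hasFDerivAt).sub (h3.hasFDerivAt.mul h2.hasFDerivAt)
  rw [h.fderiv]
  simp [fderiv_t, fderiv_x, fderiv_y]
  ring

lemma hW1_contDiff {n : ℕ} (j : Fin n) : ContDiff ℝ 1 (fun η : Heis n => (hW η).1 j) := by
  have := hS_contDiff (n := n)
  unfold hW; fun_prop

lemma hW2_contDiff {n : ℕ} (j : Fin n) : ContDiff ℝ 1 (fun η : Heis n => (hW η).2 j) := by
  have := hS_contDiff (n := n)
  unfold hW; fun_prop

/-- The regularized field. -/
def hV {n : ℕ} (ε α β : ℝ) (ξ : Heis n) : (Fin n → ℝ) × (Fin n → ℝ) :=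
  (fun j => hK ε α β ξ * (hW ξ).1 j, fun j => hK ε α β ξ * (hW ξ).2 j)

lemma hDiv_hV {n : ℕ} {ε : ℝ} (hε : 0 < ε) (α β : ℝ) (ξ : Heis n) :
    hDiv (hV ε α β) ξ = 2 * α * hK ε (α - 1) β ξ * hS ξ ^ 2 +
      4 * β * hK ε α (β - 1) ξ * hS ξ * hN ξ + (4 + 2 * n) * hK ε α β ξ * hS ξ := by
  have hk : DifferentiableAt ℝ (hK ε α β) ξ := (hK_contDiff hε α β).differentiable one_ne_zero ξ
  have key : ∀ j, XH j (fun η => (hV ε α β η).1 j) ξ + YH j (fun η => (hV ε α β η).2 j) ξ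
      = (ξ.1 j ^ 2 + ξ.2.1 j ^ 2) * (2 * α * hK ε (α - 1) β ξ * hS ξ +
      4 * β * hK ε α (β - 1) ξ * hN ξ + 4 * hK ε α β ξ) + 2 * hK ε α β ξ * hS ξ := by
    intro j
    have h1 := (hW1_contDiff j).differentiable one_ne_zero ξ
    have h2 := (hW2_contDiff j).differentiable one_ne_zero ξ
    have e1 : ∀ w, fderiv ℝ (fun η => (hV ε α β η).1 j) ξ w =
        hK ε α β ξ * fderiv ℝ (fun η => (hW η).1 j) ξ w +
        (hW ξ).1 j * fderiv ℝ (hK ε α β) ξ w := by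
      intro w
      simp only [hV]
      rw [fderiv_fun_mul hk h1]; simp
    have e2 : ∀ w, fderiv ℝ (fun η => (hV ε α β η).2 j) ξ w =
        hK ε α β ξ * fderiv ℝ (fun η => (hW η).2 j) ξ w +
        (hW ξ).2 j * fderiv ℝ (hK ε α β) ξ w := by
      intro w
      simp only [hV]
      rw [fderiv_fun_mul hk h2]; simp
    simp only [XH, YH, e1, e2, fderiv_hW1, fderiv_hW2, fderiv_hK hε, fderiv_hN, fderiv_hS]
    simp [Pi.single_apply, hW]
    rw [hN]
    ring
  unfold hDiv
  rw [Finset.sum_congr rfl fun j _ => key j, Finset.sum_add_distrib, ← Finset.sum_mul,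
    Finset.sum_add_distrib]
  simp only [Finset.sum_const, Finset.card_univ, Fintype.card_fin, nsmul_eq_mul]
  rw [show ∑ i, ξ.1 i ^ 2 + ∑ i, ξ.2.1 i ^ 2 = hS ξ from rfl]
  ring

lemma hNorm_hW {n : ℕ} (ξ : Heis n) : hNorm (hW ξ) = √(hS ξ) * √(hN ξ) := by
  rw [← Real.sqrt_mul (hS_nonneg ξ), hNorm]
  congr 1
  rw [← Finset.sum_add_distrib]
  have : ∀ j, (hW ξ).1 j ^ 2 + (hW ξ).2 j ^ 2 = (ξ.1 j ^ 2 + ξ.2.1 j ^ 2) * hN ξ := by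
    intro j; simp only [hW, hN]; ring
  simp only [this]
  rw [← Finset.sum_mul, Finset.sum_add_distrib]; rfl

lemma abs_hDot_le {n : ℕ} (v w : (Fin n → ℝ) × (Fin n → ℝ)) :
    |hDot v w| ≤ hNorm v * hNorm w := by
  have h := Finset.sum_mul_sq_le_sq_mul_sq Finset.univ (Sum.elim v.1 v.2) (Sum.elim w.1 w.2)
  simp only [Fintype.sum_sum_type, Sum.elim_inl, Sum.elim_inr] at h
  unfold hNorm
  rw [← Real.sqrt_mul (by positivity)]
  exact Real.abs_le_sqrt h

lemma int_of_contOn {n : ℕ} {f g : Heis n → ℝ} (hf : IsTestAwayZero f)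
    (hg : ContinuousOn g {0}ᶜ) (hs : ∀ ξ, ξ ∉ tsupport f → g ξ = 0) : Integrable g := by
  obtain ⟨_, h2, h3⟩ := hf
  rw [← integrableOn_iff_integrable_of_support_subset (s := tsupport f)]
  · refine ContinuousOn.integrableOn_compact h2 (hg.mono ?_)
    intro ξ hξ h0
    rw [Set.mem_singleton_iff] at h0
    exact h3 (h0 ▸ hξ)
  · intro ξ hξ
    by_contra h
    exact hξ (hs ξ h)

lemma zNorm_eq {n : ℕ} (ξ : Heis n) : zNorm ξ = √(hS ξ) := rfl

lemma dH_eq {n : ℕ} (ξ : Heis n) : dH ξ = hN ξ ^ (1 / 4 : ℝ) := rfl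

lemma dH_pos {n : ℕ} {ξ : Heis n} (h : ξ ≠ 0) : 0 < dH ξ := by
  rw [dH_eq]; exact rpow_pos_of_pos (hN_pos h) _

lemma zNorm_nonneg {n : ℕ} (ξ : Heis n) : 0 ≤ zNorm ξ := Real.sqrt_nonneg _

lemma hNorm_nonneg {n : ℕ} (v : (Fin n → ℝ) × (Fin n → ℝ)) : 0 ≤ hNorm v := Real.sqrt_nonneg _

lemma dH_nonneg {n : ℕ} (ξ : Heis n) : 0 ≤ dH ξ := by
  rw [dH_eq]; exact rpow_nonneg (hN_nonneg ξ) _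

lemma zNorm_cont {n : ℕ} : Continuous (zNorm (n := n)) := hS_contDiff.continuous.sqrt

lemma dH_cont {n : ℕ} : Continuous (dH (n := n)) :=
  hN_contDiff.continuous.rpow_const fun _ => Or.inr (by norm_num)

lemma hN_rpow {n : ℕ} (ξ : Heis n) (β : ℝ) : hN ξ ^ β = dH ξ ^ (4 * β) := by
  rw [dH_eq, ← rpow_mul (hN_nonneg ξ)]; congr 1; ring

lemma hS_rpow {n : ℕ} (ξ : Heis n) (β : ℝ) : hS ξ ^ β = zNorm ξ ^ (2 * β) := by
  rw [zNorm_eq, Real.sqrt_eq_rpow, ← rpow_mul (hS_nonneg ξ)]; congr 1; ring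

lemma hGrad_cont {n : ℕ} {f : Heis n → ℝ} (hf : ContDiff ℝ 1 f) :
    Continuous (fun ξ => hNorm (hGrad f ξ)) := by
  have h : ∀ v, Continuous (fun ξ => fderiv ℝ f ξ v) := fun v =>
    (hf.continuous_fderiv one_ne_zero).clm_apply continuous_const
  unfold hNorm hGrad XH YH
  have := h (0, 0, 1)
  have h1 := fun j : Fin n => h (Pi.single j 1, 0, 0)
  have h2 := fun j : Fin n => h (0, Pi.single j 1, 0)
  fun_prop

lemma hGrad_zero {n : ℕ} {f : Heis n → ℝ} {ξ : Heis n} (h : ξ ∉ tsupport f) :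
    hNorm (hGrad f ξ) = 0 := by
  have := fderiv_of_notMem_tsupport (𝕜 := ℝ) h
  simp [hNorm, hGrad, XH, YH, this]

lemma rpow_shift_le {N ε β : ℝ} (hN : 0 < N) (h0 : 0 ≤ ε) (h1 : ε ≤ 1) :
    (N + ε) ^ β ≤ N ^ β + (N + 1) ^ β := by
  have p1 : 0 ≤ N ^ β := rpow_nonneg hN.le _
  have p2 : 0 ≤ (N + 1) ^ β := rpow_nonneg (by linarith) _
  rcases le_total 0 β with h | h
  · have := rpow_le_rpow (by linarith : 0 ≤ N + ε) (by linarith : N + ε ≤ N + 1) h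
    linarith
  · have := rpow_le_rpow_of_nonpos hN (by linarith : N ≤ N + ε) h
    linarith

lemma shift_tendsto {s β : ℝ} (h : s ≠ 0 ∨ 0 < β) :
    Filter.Tendsto (fun ε : ℝ => (s + ε) ^ β) (nhdsWithin 0 (Set.Ioi 0)) (nhds (s ^ β)) := by
  have h1 : Filter.Tendsto (fun ε : ℝ => s + ε) (nhdsWithin 0 (Set.Ioi 0)) (nhds s) := by
    have : Filter.Tendsto (fun ε : ℝ => s + ε) (nhds 0) (nhds (s + 0)) :=
      (continuous_const.add continuous_id).tendsto 0
    rw [add_zero] at this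
    exact this.mono_left nhdsWithin_le_nhds
  exact h1.rpow_const (h.imp id le_of_lt)

lemma hDiv_bound {n : ℕ} {ε α β : ℝ} (h0 : 0 < ε) (h1 : ε ≤ 1) (hα : 0 ≤ α + 1) {ξ : Heis n}
    (hξ : ξ ≠ 0) :
    |hDiv (hV ε α β) ξ| ≤ (|2 * α| + |4 * β| + (4 + 2 * n)) *
      ((hS ξ + 1) ^ (α + 1) * (hN ξ ^ β + (hN ξ + 1) ^ β)) := by
  have hs := hS_nonneg ξ
  have hn := hN_pos hξ
  have sp : 0 < hS ξ + ε := by linarith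
  have np : 0 < hN ξ + ε := by linarith
  set T := (hS ξ + ε) ^ (α + 1) * (hN ξ + ε) ^ β with hT
  have hT0 : 0 ≤ T := by positivity
  have hTle : T ≤ (hS ξ + 1) ^ (α + 1) * (hN ξ ^ β + (hN ξ + 1) ^ β) := by
    have e1 := rpow_shift_le (β := β) hn h0.le h1
    have e2 : (hS ξ + ε) ^ (α + 1) ≤ (hS ξ + 1) ^ (α + 1) :=
      rpow_le_rpow sp.le (by linarith) hα
    rw [hT]
    exact mul_le_mul e2 e1 (by positivity) (by positivity)
  have a1 : 0 ≤ hK ε (α - 1) β ξ * hS ξ ^ 2 := by unfold hK; positivity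
  have a2 : 0 ≤ hK ε α (β - 1) ξ * hS ξ * hN ξ := by unfold hK; positivity
  have a3 : 0 ≤ hK ε α β ξ * hS ξ := by unfold hK; positivity
  have eS : (hS ξ + ε) ^ (α + 1) = (hS ξ + ε) ^ α * (hS ξ + ε) := rpow_add_one sp.ne' _
  have eS' : (hS ξ + ε) ^ α = (hS ξ + ε) ^ (α - 1) * (hS ξ + ε) := by
    rw [← rpow_add_one sp.ne']; congr 1; ring
  have eN : (hN ξ + ε) ^ β = (hN ξ + ε) ^ (β - 1) * (hN ξ + ε) := by
    rw [← rpow_add_one np.ne']; congr 1; ring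
  have b1 : hK ε (α - 1) β ξ * hS ξ ^ 2 ≤ T := by
    rw [hT, eS, eS', hK]
    have q1 : 0 ≤ (hS ξ + ε) ^ (α - 1) * (hN ξ + ε) ^ β := by positivity
    nlinarith [mul_le_mul_of_nonneg_left (show hS ξ ^ 2 ≤ (hS ξ + ε) ^ 2 by gcongr; linarith) q1]
  have b2 : hK ε α (β - 1) ξ * hS ξ * hN ξ ≤ T := by
    rw [hT, eS, eN, hK]
    have q1 : 0 ≤ (hS ξ + ε) ^ α * (hN ξ + ε) ^ (β - 1) := by positivity
    have q2 : hS ξ * hN ξ ≤ (hS ξ + ε) * (hN ξ + ε) := by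
      gcongr <;> linarith
    nlinarith [mul_le_mul_of_nonneg_left q2 q1]
  have b3 : hK ε α β ξ * hS ξ ≤ T := by
    rw [hT, eS, hK]
    have q1 : 0 ≤ (hS ξ + ε) ^ α * (hN ξ + ε) ^ β := by positivity
    nlinarith [mul_le_mul_of_nonneg_left h0.le q1]
  rw [hDiv_hV h0]
  calc _ ≤ |2 * α * (hK ε (α - 1) β ξ * hS ξ ^ 2)| +
        |4 * β * (hK ε α (β - 1) ξ * hS ξ * hN ξ)| + |(4 + 2 * n) * (hK ε α β ξ * hS ξ)| := by
        refine le_trans (le_of_eq ?_) (abs_add_three _ _ _)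
        congr 1; ring
    _ = |2 * α| * (hK ε (α - 1) β ξ * hS ξ ^ 2) +
        |4 * β| * (hK ε α (β - 1) ξ * hS ξ * hN ξ) + (4 + 2 * n) * (hK ε α β ξ * hS ξ) := by
        rw [abs_mul _ (hK ε (α - 1) β ξ * hS ξ ^ 2), abs_of_nonneg a1,
          abs_mul _ (hK ε α (β - 1) ξ * hS ξ * hN ξ), abs_of_nonneg a2, abs_mul _ (_ * hS ξ),
          abs_of_nonneg a3, abs_of_nonneg (by positivity : (0 : ℝ) ≤ 4 + 2 * n)]
    _ ≤ |2 * α| * T + |4 * β| * T + (4 + 2 * n) * T := by gcongr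
    _ = (|2 * α| + |4 * β| + (4 + 2 * n)) * T := by ring
    _ ≤ _ := by gcongr

lemma hDiv_tendsto {n : ℕ} {α β : ℝ} (hα : 0 < α + 1) {ξ : Heis n} (hξ : ξ ≠ 0) :
    Filter.Tendsto (fun ε => hDiv (hV ε α β) ξ) (nhdsWithin 0 (Set.Ioi 0))
      (nhds ((2 * α + 4 * β + (4 + 2 * n)) * (hS ξ ^ (α + 1) * hN ξ ^ β))) := by
  have hn := hN_pos hξ
  have ev : (fun ε => 2 * α * hK ε (α - 1) β ξ * hS ξ ^ 2 +
      4 * β * hK ε α (β - 1) ξ * hS ξ * hN ξ + (4 + 2 * n) * hK ε α β ξ * hS ξ)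
      =ᶠ[nhdsWithin 0 (Set.Ioi 0)] (fun ε => hDiv (hV ε α β) ξ) := by
    filter_upwards [self_mem_nhdsWithin] with ε hε
    rw [hDiv_hV hε]
  refine Filter.Tendsto.congr' ev ?_
  rcases (hS_nonneg ξ).eq_or_lt with h | h
  · rw [← h, zero_rpow hα.ne']
    simp
  · have t : ∀ a b : ℝ, Filter.Tendsto (fun ε => hK ε a b ξ) (nhdsWithin 0 (Set.Ioi 0))
        (nhds (hS ξ ^ a * hN ξ ^ b)) := fun a b =>
      (shift_tendsto (Or.inl h.ne')).mul (shift_tendsto (Or.inl hn.ne'))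
    have eS : hS ξ ^ (α + 1) = hS ξ ^ α * hS ξ := rpow_add_one h.ne' _
    have eS' : hS ξ ^ α = hS ξ ^ (α - 1) * hS ξ := by
      rw [← rpow_add_one h.ne']; congr 1; ring
    have eN : hN ξ ^ β = hN ξ ^ (β - 1) * hN ξ := by
      rw [← rpow_add_one hn.ne']; congr 1; ring
    have := ((((t (α - 1) β).const_mul (2 * α)).mul_const (hS ξ ^ 2)).add
      ((((t α (β - 1)).const_mul (4 * β)).mul_const (hS ξ)).mul_const (hN ξ))).add
      (((t α β).const_mul (4 + 2 * (n : ℝ))).mul_const (hS ξ))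
    convert this using 2
    rw [eS, eS', eN]; ring

lemma hDiv_cont {n : ℕ} {ε : ℝ} (hε : 0 < ε) (α β : ℝ) :
    Continuous (fun ξ : Heis n => hDiv (hV ε α β) ξ) := by
  simp only [hDiv_hV hε]
  have h := fun a b => (hK_contDiff (n := n) hε a b).continuous
  have h1 := (hS_contDiff (n := n)).continuous
  have h2 := (hN_contDiff (n := n)).continuous
  have := h (α - 1) β
  have := h α (β - 1)
  have := h α β
  fun_prop

lemma abs_rpow_contDiff {n : ℕ} {f : Heis n → ℝ} (hf : ContDiff ℝ 1 f) {p : ℝ} (hp : 1 < p) :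
    ContDiff ℝ 1 (fun ξ => |f ξ| ^ p) := by
  simpa using hf.norm_rpow hp

lemma abs_rpow_aux {x p : ℝ} (hp : 1 < p) : |(|x| ^ (p - 2) * x)| = |x| ^ (p - 1) := by
  rcases eq_or_ne x 0 with rfl | h
  · simp [zero_rpow (by linarith : p - 1 ≠ 0)]
  · have : 0 < |x| := abs_pos.2 h
    rw [abs_mul, abs_of_nonneg (by positivity : 0 ≤ |x| ^ (p - 2)), ← rpow_add_one this.ne']
    congr 1; ring

lemma hDot_bound {n : ℕ} {f : Heis n → ℝ} (hf : ContDiff ℝ 1 f) {p ε α β : ℝ} (hp : 1 < p)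
    (hε : 0 < ε) (ξ : Heis n) :
    |hDot (hGrad (fun ξ => |f ξ| ^ p) ξ) (hV ε α β ξ)| ≤
      p * (|f ξ| ^ (p - 1) * hNorm (hGrad f ξ)) * √(hN ξ) *
        ((hS ξ + ε) ^ (α + 1 / 2) * (hN ξ + ε) ^ β) := by
  have hs := hS_nonneg ξ
  have hn := hN_nonneg ξ
  have sp : 0 < hS ξ + ε := by linarith
  have np : 0 < hN ξ + ε := by linarith
  have hd : HasFDerivAt (fun ξ => |f ξ| ^ p) _ ξ :=
    (hasDerivAt_abs_rpow (f ξ) hp).comp_hasFDerivAt ξ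
      (hf.differentiable one_ne_zero ξ).hasFDerivAt
  have e : hDot (hGrad (fun ξ => |f ξ| ^ p) ξ) (hV ε α β ξ) =
      p * (|f ξ| ^ (p - 2) * f ξ) * hK ε α β ξ * hDot (hGrad f ξ) (hW ξ) := by
    simp only [hDot, hGrad, XH, YH, hV, hd.fderiv, mul_add, Finset.mul_sum]
    congr 1
    all_goals
      refine Finset.sum_congr rfl fun j _ => ?_
      simp only [smul_apply, smul_eq_mul]
      ring
  rw [e, abs_mul, abs_mul, abs_mul, abs_rpow_aux hp, abs_of_nonneg (by linarith : 0 ≤ p),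
    abs_of_nonneg (by unfold hK; positivity : 0 ≤ hK ε α β ξ)]
  have h1 := abs_hDot_le (hGrad f ξ) (hW ξ)
  rw [hNorm_hW] at h1
  have h2 : √(hS ξ) ≤ (hS ξ + ε) ^ (1 / 2 : ℝ) := by
    rw [← Real.sqrt_eq_rpow]; exact Real.sqrt_le_sqrt (by linarith)
  have h3 : 0 ≤ hNorm (hGrad f ξ) := hNorm_nonneg _
  have hk : 0 ≤ hK ε α β ξ := by unfold hK; positivity
  calc _ ≤ p * |f ξ| ^ (p - 1) * hK ε α β ξ * (hNorm (hGrad f ξ) *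
        ((hS ξ + ε) ^ (1 / 2 : ℝ) * √(hN ξ))) := by
        refine mul_le_mul_of_nonneg_left (h1.trans ?_) (by positivity)
        gcongr
    _ = _ := by rw [rpow_add sp, hK]; ring

lemma main_ineq {n : ℕ} {f : Heis n → ℝ} (hf : IsTestAwayZero f) {p α β : ℝ} (hp : 1 < p)
    (hα : α = (p - 2) / 2) :
    |∫ ξ, |f ξ| ^ p * ((2 * α + 4 * β + (4 + 2 * n)) * (hS ξ ^ (α + 1) * hN ξ ^ β))| ≤
      ∫ ξ, p * (|f ξ| ^ (p - 1) * hNorm (hGrad f ξ)) * √(hN ξ) *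
        (hS ξ ^ (α + 1 / 2) * hN ξ ^ β) := by
  have hf1 : ContDiff ℝ 1 f := hf.1.of_le (by exact_mod_cast le_top)
  have hfc := hf1.continuous
  have h0 : ∀ ξ, ξ ∈ tsupport f → ξ ≠ 0 := fun ξ h h' => hf.2.2 (h' ▸ h)
  have hz : ∀ ξ, ξ ∉ tsupport f → f ξ = 0 := fun ξ h => image_eq_zero_of_notMem_tsupport h
  have hu := abs_rpow_contDiff hf1 hp
  have huc : HasCompactSupport (fun ξ => |f ξ| ^ p) := by
    refine hf.2.1.mono' ?_
    intro ξ hξ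
    by_contra h
    exact hξ (by simp [hz ξ h, zero_rpow (by linarith : p ≠ 0)])
  have hSc := (hS_contDiff (n := n)).continuous
  have hNc := (hN_contDiff (n := n)).continuous
  have hNon : ∀ b : ℝ, ContinuousOn (fun ξ : Heis n => hN ξ ^ b) {0}ᶜ := fun b =>
    hNc.continuousOn.rpow_const fun ξ hξ => Or.inl (hN_pos hξ).ne'
  have hN1 : ∀ b : ℝ, Continuous (fun ξ : Heis n => (hN ξ + 1) ^ b) := fun b =>
    (hNc.add continuous_const).rpow_const fun ξ => Or.inl (add_pos_of_nonneg_of_pos (hN_nonneg ξ) one_pos).ne'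
  have hS1 : ∀ b : ℝ, Continuous (fun ξ : Heis n => (hS ξ + 1) ^ b) := fun b =>
    (hSc.add continuous_const).rpow_const fun ξ => Or.inl (add_pos_of_nonneg_of_pos (hS_nonneg ξ) one_pos).ne'
  have hfp : Continuous (fun ξ => |f ξ| ^ (p - 1)) :=
    hfc.abs.rpow_const fun _ => Or.inr (by linarith)
  have hG := hGrad_cont hf1
  have smem : Set.Ioc (0 : ℝ) 1 ∈ nhdsWithin (0 : ℝ) (Set.Ioi 0) :=
    Ioc_mem_nhdsGT one_pos
  -- left side
  have tA : Filter.Tendsto (fun ε => ∫ ξ, |f ξ| ^ p * hDiv (hV ε α β) ξ)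
      (nhdsWithin 0 (Set.Ioi 0))
      (nhds (∫ ξ, |f ξ| ^ p * ((2 * α + 4 * β + (4 + 2 * n)) *
        (hS ξ ^ (α + 1) * hN ξ ^ β)))) := by
    refine tendsto_integral_filter_of_dominated_convergence
      (fun ξ => |f ξ| ^ p * ((|2 * α| + |4 * β| + (4 + 2 * n)) *
      ((hS ξ + 1) ^ (α + 1) * (hN ξ ^ β + (hN ξ + 1) ^ β)))) ?_ ?_ ?_ ?_
    · filter_upwards [smem] with ε hε
      exact (hu.continuous.mul (hDiv_cont hε.1 α β)).aestronglyMeasurable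
    · filter_upwards [smem] with ε hε
      refine Filter.Eventually.of_forall fun ξ => ?_
      rw [norm_mul, Real.norm_of_nonneg (by positivity), Real.norm_eq_abs]
      by_cases h : ξ ∈ tsupport f
      · exact mul_le_mul_of_nonneg_left (hDiv_bound hε.1 hε.2 (by linarith) (h0 ξ h))
          (by positivity)
      · simp [hz ξ h, zero_rpow (by linarith : p ≠ 0)]
    · refine int_of_contOn hf ?_ ?_
      · exact hu.continuous.continuousOn.mul (continuousOn_const.mul
          ((hS1 _).continuousOn.mul ((hNon β).add (hN1 β).continuousOn)))
      · intro ξ h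
        simp [hz ξ h, zero_rpow (by linarith : p ≠ 0)]
    · refine Filter.Eventually.of_forall fun ξ => ?_
      by_cases h : ξ ∈ tsupport f
      · exact (hDiv_tendsto (by linarith) (h0 ξ h)).const_mul _
      · simp [hz ξ h, zero_rpow (by linarith : p ≠ 0)]
  have bint : Integrable (fun ξ => p * (|f ξ| ^ (p - 1) * hNorm (hGrad f ξ)) * √(hN ξ) *
        ((hS ξ + 1) ^ (α + 1 / 2) * (hN ξ ^ β + (hN ξ + 1) ^ β))) := by
    refine int_of_contOn hf ?_ ?_
    · refine ContinuousOn.mul (Continuous.continuousOn (by fun_prop)) ?_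
      exact (hS1 _).continuousOn.mul ((hNon β).add (hN1 β).continuousOn)
    · intro ξ h
      simp [hGrad_zero h]
  have bcont : ∀ ε : ℝ, 0 < ε →
      Continuous (fun ξ => p * (|f ξ| ^ (p - 1) * hNorm (hGrad f ξ)) * √(hN ξ) *
        ((hS ξ + ε) ^ (α + 1 / 2) * (hN ξ + ε) ^ β)) := by
    intro ε hε
    have := (hK_contDiff (n := n) hε (α + 1 / 2) β).continuous
    unfold hK at this
    exact Continuous.mul (by fun_prop) this
  have bbd : ∀ ε ∈ Set.Ioc (0 : ℝ) 1, ∀ ξ,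
      ‖p * (|f ξ| ^ (p - 1) * hNorm (hGrad f ξ)) * √(hN ξ) *
        ((hS ξ + ε) ^ (α + 1 / 2) * (hN ξ + ε) ^ β)‖ ≤
      p * (|f ξ| ^ (p - 1) * hNorm (hGrad f ξ)) * √(hN ξ) *
        ((hS ξ + 1) ^ (α + 1 / 2) * (hN ξ ^ β + (hN ξ + 1) ^ β)) := by
    intro ε hε ξ
    by_cases h : ξ ∈ tsupport f
    · have hs := hS_nonneg ξ
      have hn := hN_pos (h0 ξ h)
      have h3 : 0 ≤ hNorm (hGrad f ξ) := hNorm_nonneg _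
      have sp : 0 < hS ξ + ε := by linarith [hε.1]
      have np : 0 < hN ξ + ε := by linarith [hε.1]
      have e1 := rpow_shift_le (β := β) hn hε.1.le hε.2
      have e2 : (hS ξ + ε) ^ (α + 1 / 2) ≤ (hS ξ + 1) ^ (α + 1 / 2) :=
        rpow_le_rpow sp.le (by linarith [hε.2]) (by linarith)
      rw [Real.norm_of_nonneg (by positivity)]
      gcongr
    · simp [hGrad_zero h]
  have tB : Filter.Tendsto (fun ε => ∫ ξ, p * (|f ξ| ^ (p - 1) * hNorm (hGrad f ξ)) * √(hN ξ) *
        ((hS ξ + ε) ^ (α + 1 / 2) * (hN ξ + ε) ^ β))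
      (nhdsWithin 0 (Set.Ioi 0))
      (nhds (∫ ξ, p * (|f ξ| ^ (p - 1) * hNorm (hGrad f ξ)) * √(hN ξ) *
        (hS ξ ^ (α + 1 / 2) * hN ξ ^ β))) := by
    refine tendsto_integral_filter_of_dominated_convergence _ ?_ ?_ bint ?_
    · filter_upwards [smem] with ε hε
      exact (bcont ε hε.1).aestronglyMeasurable
    · filter_upwards [smem] with ε hε
      exact Filter.Eventually.of_forall (bbd ε hε)
    · refine Filter.Eventually.of_forall fun ξ => ?_
      by_cases h : ξ ∈ tsupport f
      · exact ((shift_tendsto (Or.inr (by linarith))).mul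
          (shift_tendsto (Or.inl (hN_pos (h0 ξ h)).ne'))).const_mul _
      · simp [hGrad_zero h]
  refine le_of_tendsto_of_tendsto tA.abs tB ?_
  filter_upwards [smem] with ε hε
  have hk := hK_contDiff (n := n) hε.1 α β
  rw [ibp_div hu huc (V := hV ε α β) (fun j => hk.mul (hW1_contDiff j))
    (fun j => hk.mul (hW2_contDiff j)), abs_neg, ← Real.norm_eq_abs]
  refine norm_integral_le_of_norm_le ?_
    (Filter.Eventually.of_forall fun ξ => hDot_bound hf1 hp hε.1 ξ)
  exact bint.mono' (bcont ε hε.1).aestronglyMeasurable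
    (Filter.Eventually.of_forall (bbd ε hε))

/-- Theorem 2.1: sharp interpolation inequality of Hardy type on `ℍⁿ`. -/
theorem hardy_interpolation_Heisenberg
    (n : ℕ) (p q a b : ℝ) (hp : 1 < p) (hpQ : p < 2 * n + 2)
    (hQ : (2 * n + 2 : ℝ) ≠ 1 + (a + b)) (hpq : 1 / p + 1 / q = 1)
    (f : Heis n → ℝ) (hf : IsTestAwayZero f) :
    |(2 * n + 2 - 1 - (a + b)) / p| *
        ∫ ξ : Heis n, zNorm ξ ^ p / dH ξ ^ p * (|f ξ| ^ p / dH ξ ^ (a + b + 1)) ≤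
      (∫ ξ : Heis n, hNorm (hGrad f ξ) ^ p / dH ξ ^ (a * p)) ^ (1 / p) *
        (∫ ξ : Heis n, zNorm ξ ^ p / dH ξ ^ p * (|f ξ| ^ p / dH ξ ^ (b * q))) ^ (1 / q) := by
  have hf1 : ContDiff ℝ 1 f := hf.1.of_le (by exact_mod_cast le_top)
  have hfc := hf1.continuous
  have h0 : ∀ ξ, ξ ∈ tsupport f → ξ ≠ 0 := fun ξ h h' => hf.2.2 (h' ▸ h)
  have hz : ∀ ξ, ξ ∉ tsupport f → f ξ = 0 := fun ξ h => image_eq_zero_of_notMem_tsupport h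
  have hp0 : 0 < p := by linarith
  have hH : p.HolderConjugate q := by
    rw [Real.holderConjugate_iff]
    exact ⟨hp, by simpa using hpq⟩
  have hq0 : 0 < q := hH.symm.pos
  have hpq' : (p - 1) * q = p := hH.sub_one_mul_conj
  have hm := main_ineq hf (β := -(p + 1 + (a + b)) / 4) hp (α := (p - 2) / 2) rfl
  set F : Heis n → ℝ := fun ξ => hNorm (hGrad f ξ) / dH ξ ^ a with hF
  set G : Heis n → ℝ := fun ξ => zNorm ξ ^ (p - 1) / dH ξ ^ (p - 1) *
    (|f ξ| ^ (p - 1) / dH ξ ^ b) with hGdef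
  have hF0 : ∀ ξ, 0 ≤ F ξ := fun ξ => by
    have := hNorm_nonneg (hGrad f ξ)
    have := dH_nonneg ξ
    simp only [hF]; positivity
  have hG0 : ∀ ξ, 0 ≤ G ξ := fun ξ => by
    have := zNorm_nonneg ξ
    have := dH_nonneg ξ
    simp only [hGdef]; positivity
  have eF : ∀ ξ, F ξ ^ p = hNorm (hGrad f ξ) ^ p / dH ξ ^ (a * p) := fun ξ => by
    have h1 := hNorm_nonneg (hGrad f ξ)
    have h2 := dH_nonneg ξ
    simp only [hF]
    rw [div_rpow h1 (by positivity), ← rpow_mul h2]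
  have eG : ∀ ξ, G ξ ^ q = zNorm ξ ^ p / dH ξ ^ p * (|f ξ| ^ p / dH ξ ^ (b * q)) := fun ξ => by
    have h1 := zNorm_nonneg ξ
    have h2 := dH_nonneg ξ
    simp only [hGdef]
    rw [mul_rpow (by positivity) (by positivity), div_rpow (by positivity) (by positivity),
      div_rpow (by positivity) (by positivity), ← rpow_mul h2, ← rpow_mul h2, ← rpow_mul h1,
      ← rpow_mul (abs_nonneg _), hpq']
  have dne : ∀ c : ℝ, ContinuousOn (fun ξ : Heis n => dH ξ ^ c) {0}ᶜ := fun c =>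
    dH_cont.continuousOn.rpow_const fun ξ hξ => Or.inl (dH_pos hξ).ne'
  have dne' : ∀ c : ℝ, ∀ ξ ∈ ({0}ᶜ : Set (Heis n)), dH ξ ^ c ≠ 0 := fun c ξ hξ =>
    (rpow_pos_of_pos (dH_pos hξ) _).ne'
  have cF : ContinuousOn F {0}ᶜ := (hGrad_cont hf1).continuousOn.div (dne a) (dne' a)
  have cG : ContinuousOn G {0}ᶜ := by
    refine ContinuousOn.mul (ContinuousOn.div ?_ (dne _) (dne' _))
      (ContinuousOn.div ?_ (dne _) (dne' _))
    · exact (zNorm_cont.rpow_const fun _ => Or.inr (by linarith)).continuousOn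
    · exact (hfc.abs.rpow_const fun _ => Or.inr (by linarith)).continuousOn
  have zF : ∀ ξ, ξ ∉ tsupport f → F ξ = 0 := fun ξ h => by simp [hF, hGrad_zero h]
  have zG : ∀ ξ, ξ ∉ tsupport f → G ξ = 0 := fun ξ h => by
    simp [hGdef, hz ξ h, zero_rpow (by linarith : p - 1 ≠ 0)]
  have memF : MemLp F (ENNReal.ofReal p) volume := by
    rw [← integrable_norm_rpow_iff (int_of_contOn hf cF zF).aestronglyMeasurable
      (by simpa using hp0) (by simp), ENNReal.toReal_ofReal hp0.le]
    refine int_of_contOn hf (cF.norm.rpow_const fun _ _ => Or.inr hp0.le) fun ξ h => ?_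
    simp [zF ξ h, zero_rpow hp0.ne']
  have memG : MemLp G (ENNReal.ofReal q) volume := by
    rw [← integrable_norm_rpow_iff (int_of_contOn hf cG zG).aestronglyMeasurable
      (by simpa using hq0) (by simp), ENNReal.toReal_ofReal hq0.le]
    refine int_of_contOn hf (cG.norm.rpow_const fun _ _ => Or.inr hq0.le) fun ξ h => ?_
    simp [zG ξ h, zero_rpow hq0.ne']
  have hold := integral_mul_le_Lp_mul_Lq_of_nonneg hH (Filter.Eventually.of_forall hF0)
    (Filter.Eventually.of_forall hG0) memF memG
  simp only [eF, eG] at hold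
  refine le_trans ?_ hold
  have eR : ∀ ξ, p * (|f ξ| ^ (p - 1) * hNorm (hGrad f ξ)) * √(hN ξ) *
        (hS ξ ^ ((p - 2) / 2 + 1 / 2) * hN ξ ^ (-(p + 1 + (a + b)) / 4)) = p * (F ξ * G ξ) := by
    intro ξ
    by_cases h : ξ ∈ tsupport f
    · have hd := dH_pos (h0 ξ h)
      have e1 : √(hN ξ) * hN ξ ^ (-(p + 1 + (a + b)) / 4) =
          (dH ξ ^ a)⁻¹ * (dH ξ ^ (p - 1))⁻¹ * (dH ξ ^ b)⁻¹ := by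
        rw [Real.sqrt_eq_rpow, hN_rpow, hN_rpow, ← rpow_neg hd.le, ← rpow_neg hd.le,
          ← rpow_neg hd.le, ← rpow_add hd, ← rpow_add hd, ← rpow_add hd]
        congr 1; ring
      have e2 : hS ξ ^ ((p - 2) / 2 + 1 / 2) = zNorm ξ ^ (p - 1) := by
        rw [hS_rpow]; congr 1; ring
      calc _ = p * (|f ξ| ^ (p - 1) * hNorm (hGrad f ξ)) * hS ξ ^ ((p - 2) / 2 + 1 / 2) *
            (√(hN ξ) * hN ξ ^ (-(p + 1 + (a + b)) / 4)) := by ring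
        _ = _ := by
          rw [e1, e2]; simp only [hF, hGdef, div_eq_mul_inv]; ring
    · rw [zF ξ h, hGrad_zero h]; simp
  have eL : ∀ ξ, |f ξ| ^ p * ((2 * ((p - 2) / 2) + 4 * (-(p + 1 + (a + b)) / 4) + (4 + 2 * n)) *
        (hS ξ ^ ((p - 2) / 2 + 1) * hN ξ ^ (-(p + 1 + (a + b)) / 4))) =
      (2 * n + 2 - 1 - (a + b)) *
        (zNorm ξ ^ p / dH ξ ^ p * (|f ξ| ^ p / dH ξ ^ (a + b + 1))) := by
    intro ξ
    by_cases h : ξ ∈ tsupport f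
    · have hd := dH_pos (h0 ξ h)
      have e1 : hN ξ ^ (-(p + 1 + (a + b)) / 4) =
          (dH ξ ^ p)⁻¹ * (dH ξ ^ (a + b + 1))⁻¹ := by
        rw [hN_rpow, ← rpow_neg hd.le, ← rpow_neg hd.le, ← rpow_add hd]
        congr 1; ring
      have e2 : hS ξ ^ ((p - 2) / 2 + 1) = zNorm ξ ^ p := by
        rw [hS_rpow]; congr 1; ring
      rw [e1, e2]; simp only [div_eq_mul_inv]; ring
    · simp [hz ξ h, zero_rpow hp0.ne']
  simp only [eR, eL] at hm
  rw [integral_const_mul, integral_const_mul, abs_mul] at hm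
  have hI : 0 ≤ ∫ ξ : Heis n, zNorm ξ ^ p / dH ξ ^ p * (|f ξ| ^ p / dH ξ ^ (a + b + 1)) := by
    refine integral_nonneg fun ξ => ?_
    have := zNorm_nonneg ξ
    have := dH_nonneg ξ
    positivity
  rw [abs_of_nonneg hI] at hm
  rw [abs_div, abs_of_pos hp0, div_mul_eq_mul_div, div_le_iff₀ hp0]
  linarith
end
end

section
/- Let Q > 2. For every smooth compactly supported function f on ℍⁿ \ {0}, the weighted L² Hardy inequality ((Q − 2)/2)² · ∫_{ℍⁿ} (|z|²/d²) · (|f|²/d²) dξ ≤ ∫_{ℍⁿ} |∇_H f|² dξ holds, with sharp constant. -/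
open MeasureTheory Real

noncomputable section

def rrH {n : ℕ} (ξ : Heis n) : ℝ := ∑ j, ξ.1 j ^ 2 + ∑ j, ξ.2.1 j ^ 2

def NNH {n : ℕ} (ξ : Heis n) : ℝ := rrH ξ ^ 2 + ξ.2.2 ^ 2

def AH {n : ℕ} (j : Fin n) (ξ : Heis n) : ℝ := rrH ξ * ξ.1 j + ξ.2.2 * ξ.2.1 j

def BH {n : ℕ} (j : Fin n) (ξ : Heis n) : ℝ := rrH ξ * ξ.2.1 j - ξ.2.2 * ξ.1 j

def vX {n : ℕ} (j : Fin n) (ξ : Heis n) : Heis n := (Pi.single j 1, 0, 2 * ξ.2.1 j)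

def vY {n : ℕ} (j : Fin n) (ξ : Heis n) : Heis n := (0, Pi.single j 1, - (2 * ξ.1 j))

lemma XH_eq {n : ℕ} (j : Fin n) (f : Heis n → ℝ) (ξ : Heis n) :
    XH j f ξ = fderiv ℝ f ξ (vX j ξ) := by
  have : vX j ξ = (Pi.single j 1, 0, 0) + (2 * ξ.2.1 j) • ((0, 0, 1) : Heis n) := by
    simp [vX]
  rw [this, map_add, map_smul, XH, smul_eq_mul]

lemma YH_eq {n : ℕ} (j : Fin n) (f : Heis n → ℝ) (ξ : Heis n) :
    YH j f ξ = fderiv ℝ f ξ (vY j ξ) := by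
  have : vY j ξ = (0, Pi.single j 1, 0) + (- (2 * ξ.1 j)) • ((0, 0, 1) : Heis n) := by
    simp [vY]
  rw [this, map_add, map_smul, YH, smul_eq_mul]
  ring

lemma rrH_nonneg {n : ℕ} (ξ : Heis n) : 0 ≤ rrH ξ := by
  unfold rrH; positivity

lemma NNH_nonneg {n : ℕ} (ξ : Heis n) : 0 ≤ NNH ξ := by
  unfold NNH; positivity

lemma NNH_eq_zero {n : ℕ} {ξ : Heis n} (h : NNH ξ = 0) : ξ = 0 := by
  unfold NNH at h
  have h1 : rrH ξ = 0 := by nlinarith [sq_nonneg (rrH ξ), sq_nonneg ξ.2.2]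
  have h2 : ξ.2.2 = 0 := by nlinarith [sq_nonneg (rrH ξ), sq_nonneg ξ.2.2]
  have hx : ∑ j, ξ.1 j ^ 2 = 0 := by
    have a : 0 ≤ ∑ j, ξ.1 j ^ 2 := by positivity
    have b : 0 ≤ ∑ j, ξ.2.1 j ^ 2 := by positivity
    unfold rrH at h1; linarith
  have hy : ∑ j, ξ.2.1 j ^ 2 = 0 := by
    unfold rrH at h1; linarith
  rw [Finset.sum_eq_zero_iff_of_nonneg (fun i _ => sq_nonneg _)] at hx hy
  ext j
  · simpa using hx j (Finset.mem_univ _)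
  · simpa using hy j (Finset.mem_univ _)
  · simpa using h2

lemma rrH_zero {n : ℕ} : rrH (0 : Heis n) = 0 := by simp [rrH]

lemma NNH_zero {n : ℕ} : NNH (0 : Heis n) = 0 := by simp [NNH, rrH]

lemma contDiff_rrH {n : ℕ} : ContDiff ℝ (⊤ : ℕ∞) (rrH (n := n)) := by
  unfold rrH; fun_prop

lemma contDiff_NNH {n : ℕ} : ContDiff ℝ (⊤ : ℕ∞) (NNH (n := n)) := by
  have := contDiff_rrH (n := n)
  unfold NNH; fun_prop

lemma contDiff_AH {n : ℕ} (j : Fin n) : ContDiff ℝ (⊤ : ℕ∞) (AH j) := by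
  have := contDiff_rrH (n := n)
  unfold AH; fun_prop

lemma contDiff_BH {n : ℕ} (j : Fin n) : ContDiff ℝ (⊤ : ℕ∞) (BH j) := by
  have := contDiff_rrH (n := n)
  unfold BH; fun_prop

def cx {n : ℕ} (j : Fin n) : Heis n →L[ℝ] ℝ :=
  (ContinuousLinearMap.proj j).comp (ContinuousLinearMap.fst ℝ _ _)
def cy {n : ℕ} (j : Fin n) : Heis n →L[ℝ] ℝ :=
  (ContinuousLinearMap.proj j).comp
    ((ContinuousLinearMap.fst ℝ _ _).comp (ContinuousLinearMap.snd ℝ _ _))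
def ct {n : ℕ} : Heis n →L[ℝ] ℝ :=
  (ContinuousLinearMap.snd ℝ _ _).comp (ContinuousLinearMap.snd ℝ _ _)

lemma hasx {n : ℕ} (j : Fin n) (ξ : Heis n) : HasFDerivAt (fun η : Heis n => η.1 j) (cx j) ξ :=
  (cx j).hasFDerivAt
lemma hasy {n : ℕ} (j : Fin n) (ξ : Heis n) : HasFDerivAt (fun η : Heis n => η.2.1 j) (cy j) ξ :=
  (cy j).hasFDerivAt
lemma hast {n : ℕ} (ξ : Heis n) : HasFDerivAt (fun η : Heis n => η.2.2) ct ξ :=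
  (ct (n := n)).hasFDerivAt
@[simp] lemma cx_app {n : ℕ} (j : Fin n) (v : Heis n) : cx j v = v.1 j := rfl
@[simp] lemma cy_app {n : ℕ} (j : Fin n) (v : Heis n) : cy j v = v.2.1 j := rfl
@[simp] lemma ct_app {n : ℕ} (v : Heis n) : ct v = v.2.2 := rfl

def drr {n : ℕ} (ξ : Heis n) : Heis n →L[ℝ] ℝ :=
  ∑ j, (2 * ξ.1 j) • cx j + ∑ j, (2 * ξ.2.1 j) • cy j

lemma has_rr {n : ℕ} (ξ : Heis n) : HasFDerivAt rrH (drr ξ) ξ := by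
  unfold rrH drr
  refine HasFDerivAt.add (HasFDerivAt.fun_sum fun j _ => ?_) (HasFDerivAt.fun_sum fun j _ => ?_)
  · simpa using (hasx j ξ).pow 2
  · simpa using (hasy j ξ).pow 2

lemma drr_vX {n : ℕ} (j : Fin n) (ξ : Heis n) : drr ξ (vX j ξ) = 2 * ξ.1 j := by
  simp [drr, vX, Pi.single_apply]
lemma drr_vY {n : ℕ} (j : Fin n) (ξ : Heis n) : drr ξ (vY j ξ) = 2 * ξ.2.1 j := by
  simp [drr, vY, Pi.single_apply]

lemma has_NN {n : ℕ} (ξ : Heis n) :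
    HasFDerivAt NNH ((2 * rrH ξ) • drr ξ + (2 * ξ.2.2) • ct) ξ := by
  unfold NNH
  simpa using ((has_rr ξ).pow 2).fun_add ((hast ξ).pow 2)

lemma XH_NN {n : ℕ} (j : Fin n) (ξ : Heis n) : XH j NNH ξ = 4 * AH j ξ := by
  rw [XH_eq, (has_NN ξ).fderiv]
  simp [drr_vX, AH]
  simp [vX]; ring
lemma YH_NN {n : ℕ} (j : Fin n) (ξ : Heis n) : YH j NNH ξ = 4 * BH j ξ := by
  rw [YH_eq, (has_NN ξ).fderiv]
  simp [drr_vY, BH]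
  simp [vY]; ring

lemma XH_A {n : ℕ} (j : Fin n) (ξ : Heis n) :
    XH j (AH j) ξ = rrH ξ + 2 * ξ.1 j ^ 2 + 2 * ξ.2.1 j ^ 2 := by
  have : HasFDerivAt (AH j) _ ξ := ((has_rr ξ).mul (hasx j ξ)).add ((hast ξ).mul (hasy j ξ))
  rw [XH_eq, this.fderiv]
  simp [drr_vX]
  simp [vX]; ring
lemma YH_B {n : ℕ} (j : Fin n) (ξ : Heis n) :
    YH j (BH j) ξ = rrH ξ + 2 * ξ.1 j ^ 2 + 2 * ξ.2.1 j ^ 2 := by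
  have : HasFDerivAt (BH j) _ ξ := ((has_rr ξ).mul (hasy j ξ)).sub ((hast ξ).mul (hasx j ξ))
  rw [YH_eq, this.fderiv]
  simp [drr_vY]
  simp [vY]; ring

lemma sum_AB {n : ℕ} (ξ : Heis n) : ∑ j, (AH j ξ ^ 2 + BH j ξ ^ 2) = rrH ξ * NNH ξ := by
  have : ∀ j, AH j ξ ^ 2 + BH j ξ ^ 2 = NNH ξ * (ξ.1 j ^ 2 + ξ.2.1 j ^ 2) := fun j => by
    simp only [AH, BH, NNH]; ring
  simp only [this, ← Finset.mul_sum, Finset.sum_add_distrib]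
  rw [mul_comm]; rfl

lemma sum_div {n : ℕ} (ξ : Heis n) :
    ∑ j, (XH j (AH j) ξ + YH j (BH j) ξ) = (2 * n + 4) * rrH ξ := by
  simp only [XH_A, YH_B]
  have : ∀ j, rrH ξ + 2 * ξ.1 j ^ 2 + 2 * ξ.2.1 j ^ 2 + (rrH ξ + 2 * ξ.1 j ^ 2 + 2 * ξ.2.1 j ^ 2)
     = 2 * rrH ξ + 4 * (ξ.1 j ^ 2 + ξ.2.1 j ^ 2) := fun j => by ring
  simp only [this, Finset.sum_add_distrib, ← Finset.mul_sum]
  change _ + 4 * rrH ξ = _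
  simp; ring

lemma XH_mul {n : ℕ} (j : Fin n) {f g : Heis n → ℝ} (hf : Differentiable ℝ f)
    (hg : Differentiable ℝ g) (ξ : Heis n) :
    XH j (fun η => f η * g η) ξ = XH j f ξ * g ξ + f ξ * XH j g ξ := by
  simp only [XH_eq]
  rw [fderiv_fun_mul (hf ξ) (hg ξ)]
  simp; ring
lemma YH_mul {n : ℕ} (j : Fin n) {f g : Heis n → ℝ} (hf : Differentiable ℝ f)
    (hg : Differentiable ℝ g) (ξ : Heis n) :
    YH j (fun η => f η * g η) ξ = YH j f ξ * g ξ + f ξ * YH j g ξ := by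
  simp only [YH_eq]
  rw [fderiv_fun_mul (hf ξ) (hg ξ)]
  simp; ring

lemma weight_eq {n : ℕ} (f : Heis n → ℝ) (ξ : Heis n) :
    zNorm ξ ^ 2 / dH ξ ^ 2 * (|f ξ| ^ 2 / dH ξ ^ 2) = rrH ξ / NNH ξ * f ξ ^ 2 := by
  have h1 : zNorm ξ ^ 2 = rrH ξ := Real.sq_sqrt (rrH_nonneg ξ)
  have h2 : dH ξ ^ 2 * dH ξ ^ 2 = NNH ξ := by
    have : dH ξ = NNH ξ ^ (1 / 4 : ℝ) := rfl
    rw [← pow_add, this, ← Real.rpow_natCast, ← Real.rpow_mul (NNH_nonneg ξ)]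
    norm_num
  rw [h1, sq_abs, ← h2, div_mul_div_comm, div_mul_eq_mul_div]

lemma hNorm_sq {n : ℕ} (f : Heis n → ℝ) (ξ : Heis n) :
    hNorm (hGrad f ξ) ^ 2 = ∑ j, (XH j f ξ ^ 2 + YH j f ξ ^ 2) := by
  rw [hNorm, Real.sq_sqrt (by positivity), Finset.sum_add_distrib]
  rfl

lemma cont_XH {n : ℕ} (j : Fin n) {f : Heis n → ℝ} (hf : ContDiff ℝ (⊤ : ℕ∞) f) :
    Continuous (XH j f) := by
  have := hf.continuous_fderiv (by simp)
  unfold XH; fun_prop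
lemma cont_YH {n : ℕ} (j : Fin n) {f : Heis n → ℝ} (hf : ContDiff ℝ (⊤ : ℕ∞) f) :
    Continuous (YH j f) := by
  have := hf.continuous_fderiv (by simp)
  unfold YH; fun_prop

lemma cs_XH {n : ℕ} (j : Fin n) {f : Heis n → ℝ} (hc : HasCompactSupport f) :
    HasCompactSupport (XH j f) := by
  refine (hc.fderiv (𝕜 := ℝ)).mono fun ξ h => ?_
  contrapose! h
  simp at h
  simp [XH, h]
lemma cs_YH {n : ℕ} (j : Fin n) {f : Heis n → ℝ} (hc : HasCompactSupport f) :
    HasCompactSupport (YH j f) := by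
  refine (hc.fderiv (𝕜 := ℝ)).mono fun ξ h => ?_
  contrapose! h
  simp at h
  simp [YH, h]

instance haarHeis {n : ℕ} : (volume : Measure (Heis n)).IsAddHaarMeasure :=
  Measure.prod.instIsAddHaarMeasure (volume : Measure (Fin n → ℝ)) 
    ((volume : Measure (Fin n → ℝ)).prod (volume : Measure ℝ))

lemma int_dir {n : ℕ} {f g : Heis n → ℝ} (hf : ContDiff ℝ (⊤ : ℕ∞) f)
    (hc : HasCompactSupport f) (hg : ContDiff ℝ (⊤ : ℕ∞) g) (v : Heis n)
    (h0 : ∀ ξ, fderiv ℝ g ξ v = 0) : 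
    ∫ ξ, g ξ * fderiv ℝ f ξ v = 0 := by
  have c1 := hf.continuous_fderiv (by simp)
  have c2 := hf.continuous
  have c3 := hg.continuous
  rw [integral_mul_fderiv_eq_neg_fderiv_mul_of_integrable]
  · simp [h0]
  · simp [h0]
  · refine Continuous.integrable_of_hasCompactSupport (by fun_prop) ?_
    exact HasCompactSupport.mul_left (hc.fderiv_apply (𝕜 := ℝ) v)
  · exact Continuous.integrable_of_hasCompactSupport (by fun_prop) hc.mul_left
  · exact fun x _ => hg.differentiable (by simp) x
  · exact fun x _ => hf.differentiable (by simp) x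

lemma integrable_dir {n : ℕ} {f g : Heis n → ℝ} (hf : ContDiff ℝ (⊤ : ℕ∞) f)
    (hc : HasCompactSupport f) (hg : ContDiff ℝ (⊤ : ℕ∞) g) (v : Heis n) :
    Integrable (fun ξ => g ξ * fderiv ℝ f ξ v) := by
  have c1 := hf.continuous_fderiv (by simp)
  have c3 := hg.continuous
  refine Continuous.integrable_of_hasCompactSupport (by fun_prop) ?_
  exact HasCompactSupport.mul_left (hc.fderiv_apply (𝕜 := ℝ) v)

lemma int_XH {n : ℕ} (j : Fin n) {f : Heis n → ℝ} (hf : ContDiff ℝ (⊤ : ℕ∞) f)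
    (hc : HasCompactSupport f) : ∫ ξ, XH j f ξ = 0 := by
  have hg : ContDiff ℝ (⊤ : ℕ∞) (fun ξ : Heis n => 2 * ξ.2.1 j) := by fun_prop
  have h1 : ContDiff ℝ (⊤ : ℕ∞) (fun ξ : Heis n => (1 : ℝ)) := by fun_prop
  have e : XH j f = fun ξ => 1 * fderiv ℝ f ξ (Pi.single j 1, 0, 0)
      + 2 * ξ.2.1 j * fderiv ℝ f ξ (0, 0, 1) := by
    ext ξ; simp [XH]
  rw [e, integral_add (integrable_dir hf hc h1 _) (integrable_dir hf hc hg _),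
    int_dir hf hc h1 _ (by simp), int_dir hf hc hg _ (fun ξ => ?_)]
  · simp
  · rw [((hasy j ξ).const_mul 2).fderiv]; simp
lemma int_YH {n : ℕ} (j : Fin n) {f : Heis n → ℝ} (hf : ContDiff ℝ (⊤ : ℕ∞) f)
    (hc : HasCompactSupport f) : ∫ ξ, YH j f ξ = 0 := by
  have hg : ContDiff ℝ (⊤ : ℕ∞) (fun ξ : Heis n => 2 * ξ.1 j) := by fun_prop
  have h1 : ContDiff ℝ (⊤ : ℕ∞) (fun ξ : Heis n => (1 : ℝ)) := by fun_prop
  have e : YH j f = fun ξ => 1 * fderiv ℝ f ξ (0, Pi.single j 1, 0)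
      - 2 * ξ.1 j * fderiv ℝ f ξ (0, 0, 1) := by
    ext ξ; simp [YH]
  rw [e, integral_sub (integrable_dir hf hc h1 _) (integrable_dir hf hc hg _),
    int_dir hf hc h1 _ (by simp), int_dir hf hc hg _ (fun ξ => ?_)]
  · simp
  · rw [((hasx j ξ).const_mul 2).fderiv]; simp

lemma part_one {n : ℕ} {f : Heis n → ℝ} (hf : IsTestAwayZero f) :
    (n : ℝ) ^ 2 * ∫ ξ : Heis n, rrH ξ / NNH ξ * f ξ ^ 2 ≤
        ∫ ξ : Heis n, ∑ j, (XH j f ξ ^ 2 + YH j f ξ ^ 2) := by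
  obtain ⟨hs, hc, h0⟩ := hf
  obtain ⟨q, hqs, hqc, hq⟩ : ∃ q : Heis n → ℝ, ContDiff ℝ (⊤ : ℕ∞) q ∧ HasCompactSupport q ∧
      f = fun ξ => q ξ * NNH ξ := by
    refine ⟨fun ξ => f ξ * (NNH ξ)⁻¹, ?_, hc.mul_right, ?_⟩
    · rw [contDiff_iff_contDiffAt]
      intro ξ
      by_cases h : NNH ξ = 0
      · have hz := NNH_eq_zero h
        subst hz
        have : (fun ξ => f ξ * (NNH ξ)⁻¹) =ᶠ[nhds 0] fun _ => 0 := by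
          filter_upwards [notMem_tsupport_iff_eventuallyEq.1 h0] with x hx
          simp [hx]
        exact contDiffAt_const.congr_of_eventuallyEq this
      · exact hs.contDiffAt.mul (contDiff_NNH.contDiffAt.inv h)
    · ext ξ
      by_cases h : NNH ξ = 0
      · have hz := NNH_eq_zero h
        subst hz
        simp [image_eq_zero_of_notMem_tsupport h0]
      · field_simp
  have dq : Differentiable ℝ q := hqs.differentiable (by simp)
  have dN : Differentiable ℝ (NNH (n := n)) := contDiff_NNH.differentiable (by simp)
  have dA : ∀ j, Differentiable ℝ (AH (n := n) j) := fun j => (contDiff_AH j).differentiable (by simp)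
  have dB : ∀ j, Differentiable ℝ (BH (n := n) j) := fun j => (contDiff_BH j).differentiable (by simp)
  have hX : ∀ j ξ, XH j f ξ = XH j q ξ * NNH ξ + q ξ * (4 * AH j ξ) := fun j ξ => by
    rw [hq, XH_mul j dq dN, XH_NN]
  have hY : ∀ j ξ, YH j f ξ = YH j q ξ * NNH ξ + q ξ * (4 * BH j ξ) := fun j ξ => by
    rw [hq, YH_mul j dq dN, YH_NN]
  have hW : ∀ ξ, rrH ξ / NNH ξ * f ξ ^ 2 = q ξ * (q ξ * (NNH ξ * rrH ξ)) := fun ξ => by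
    rw [hq]
    by_cases h : NNH ξ = 0
    · simp [h]
    · field_simp
  set F : Fin n → Heis n → ℝ := fun j ξ => q ξ * (q ξ * (NNH ξ * AH j ξ)) with hF
  set G : Fin n → Heis n → ℝ := fun j ξ => q ξ * (q ξ * (NNH ξ * BH j ξ)) with hG
  have sF : ∀ j, ContDiff ℝ (⊤ : ℕ∞) (F j) := fun j =>
    hqs.mul (hqs.mul (contDiff_NNH.mul (contDiff_AH j)))
  have sG : ∀ j, ContDiff ℝ (⊤ : ℕ∞) (G j) := fun j =>
    hqs.mul (hqs.mul (contDiff_NNH.mul (contDiff_BH j)))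
  have cF : ∀ j, HasCompactSupport (F j) := fun j => hqc.mul_right
  have cG : ∀ j, HasCompactSupport (G j) := fun j => hqc.mul_right
  have XF : ∀ j ξ, XH j (F j) ξ = 2 * q ξ * XH j q ξ * NNH ξ * AH j ξ + 4 * q ξ ^ 2 * AH j ξ ^ 2 
      + q ξ ^ 2 * NNH ξ * XH j (AH j) ξ := fun j ξ => by
    simp only [hF]
    rw [XH_mul j dq (dq.fun_mul (dN.fun_mul (dA j))), XH_mul j dq (dN.fun_mul (dA j)), XH_mul j dN (dA j),
      XH_NN]
    ring
  have YG : ∀ j ξ, YH j (G j) ξ = 2 * q ξ * YH j q ξ * NNH ξ * BH j ξ + 4 * q ξ ^ 2 * BH j ξ ^ 2 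
      + q ξ ^ 2 * NNH ξ * YH j (BH j) ξ := fun j ξ => by
    simp only [hG]
    rw [YH_mul j dq (dq.fun_mul (dN.fun_mul (dB j))), YH_mul j dq (dN.fun_mul (dB j)), YH_mul j dN (dB j),
      YH_NN]
    ring
  have iX : ∀ j, Integrable (XH j (F j)) := fun j =>
    (cont_XH j (sF j)).integrable_of_hasCompactSupport (cs_XH j (cF j))
  have iY : ∀ j, Integrable (YH j (G j)) := fun j =>
    (cont_YH j (sG j)).integrable_of_hasCompactSupport (cs_YH j (cG j))
  have iD : Integrable (fun ξ => ∑ j, (XH j (F j) ξ + YH j (G j) ξ)) :=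
    integrable_finsetSum _ fun j _ => (iX j).add (iY j)
  have zD : ∫ ξ, ∑ j, (XH j (F j) ξ + YH j (G j) ξ) = 0 := by
    rw [integral_finsetSum (f := fun j ξ => XH j (F j) ξ + YH j (G j) ξ) _
      fun j _ => (iX j).add (iY j)]
    refine Finset.sum_eq_zero fun j _ => ?_
    rw [integral_add (iX j) (iY j), int_XH j (sF j) (cF j), int_YH j (sG j) (cG j), add_zero]
  have iG : Integrable (fun ξ => ∑ j, (XH j f ξ ^ 2 + YH j f ξ ^ 2)) := by
    refine integrable_finsetSum _ fun j _ => ?_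
    have c1 := cont_XH j hs
    have c2 := cont_YH j hs
    refine Integrable.add ?_ ?_
    · refine Continuous.integrable_of_hasCompactSupport (by fun_prop) ?_
      simp only [pow_two]; exact (cs_XH j hc).mul_right
    · refine Continuous.integrable_of_hasCompactSupport (by fun_prop) ?_
      simp only [pow_two]; exact (cs_YH j hc).mul_right
  have iW : Integrable (fun ξ => rrH ξ / NNH ξ * f ξ ^ 2) := by
    simp only [hW]
    refine Continuous.integrable_of_hasCompactSupport ?_ hqc.mul_right
    exact (hqs.mul (hqs.mul (contDiff_NNH.mul contDiff_rrH))).continuous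
  have key : ∀ ξ, 0 ≤ ∑ j, (XH j f ξ ^ 2 + YH j f ξ ^ 2) +
      n * (∑ j, (XH j (F j) ξ + YH j (G j) ξ)) - (n : ℝ) ^ 2 * (rrH ξ / NNH ξ * f ξ ^ 2) := fun ξ => by
    have h1 : ∑ j, (XH j (F j) ξ + YH j (G j) ξ) =
        2 * q ξ * NNH ξ * ∑ j, (XH j q ξ * AH j ξ + YH j q ξ * BH j ξ) +
        4 * q ξ ^ 2 * (rrH ξ * NNH ξ) + q ξ ^ 2 * NNH ξ * ((2 * n + 4) * rrH ξ) := by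
      rw [← sum_AB, ← sum_div]
      simp only [Finset.mul_sum, ← Finset.sum_add_distrib]
      refine Finset.sum_congr rfl fun j _ => ?_
      rw [XF, YG]; ring
    have h2 : ∑ j, ((XH j f ξ + n * q ξ * AH j ξ) ^ 2 + (YH j f ξ + n * q ξ * BH j ξ) ^ 2) =
        ∑ j, (XH j f ξ ^ 2 + YH j f ξ ^ 2) + 
        2 * n * q ξ * NNH ξ * ∑ j, (XH j q ξ * AH j ξ + YH j q ξ * BH j ξ) +
        (8 * n + n ^ 2) * q ξ ^ 2 * (rrH ξ * NNH ξ) := by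
      rw [← sum_AB]
      simp only [Finset.mul_sum, ← Finset.sum_add_distrib]
      refine Finset.sum_congr rfl fun j _ => ?_
      rw [hX, hY]; ring
    have h3 : 0 ≤ ∑ j, ((XH j f ξ + n * q ξ * AH j ξ) ^ 2 + (YH j f ξ + n * q ξ * BH j ξ) ^ 2) := by
      positivity
    rw [h2] at h3
    rw [h1, hW]
    linarith
  have fin := integral_nonneg (μ := (volume : Measure (Heis n))) (Pi.le_def.2 key)
  rw [integral_sub (iG.fun_add (iD.const_mul _)) (iW.const_mul _), 
    integral_add iG (iD.const_mul _), integral_const_mul, integral_const_mul, zD] at fin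
  linarith


lemma norm_le_NN {n : ℕ} (ξ : Heis n) : ‖ξ‖ ≤ NNH ξ + 1 := by
  have hN := NNH_nonneg ξ
  have hb : ∀ s : ℝ, s ^ 2 ≤ rrH ξ → ‖s‖ ≤ NNH ξ + 1 := fun s hs => by
    have h1 : (s ^ 2) ^ 2 ≤ NNH ξ := by
      unfold NNH
      nlinarith [sq_nonneg s, sq_nonneg ξ.2.2]
    rw [Real.norm_eq_abs, abs_le]
    constructor <;> nlinarith [sq_nonneg (s ^ 2 - 1/2), sq_nonneg (s - 1/2), sq_nonneg (s + 1/2)]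
  rw [Prod.norm_def, Prod.norm_def]
  refine max_le ?_ (max_le ?_ ?_)
  · refine (pi_norm_le_iff_of_nonneg (by linarith)).2 fun j => hb _ ?_
    have h1 := Finset.single_le_sum (f := fun j => ξ.1 j ^ 2) (fun i _ => sq_nonneg _)
      (Finset.mem_univ j)
    have h2 : 0 ≤ ∑ j, ξ.2.1 j ^ 2 := by positivity
    unfold rrH; linarith
  · refine (pi_norm_le_iff_of_nonneg (by linarith)).2 fun j => hb _ ?_
    have h1 := Finset.single_le_sum (f := fun j => ξ.2.1 j ^ 2) (fun i _ => sq_nonneg _)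
      (Finset.mem_univ j)
    have h2 : 0 ≤ ∑ j, ξ.1 j ^ 2 := by positivity
    unfold rrH; linarith
  · have h1 : ξ.2.2 ^ 2 ≤ NNH ξ := by
      unfold NNH
      nlinarith [sq_nonneg (rrH ξ)]
    rw [Real.norm_eq_abs, abs_le]
    constructor <;> nlinarith [sq_nonneg (ξ.2.2 - 1/2), sq_nonneg (ξ.2.2 + 1/2)]

def LH {n : ℕ} (ξ : Heis n) : ℝ := Real.log (NNH ξ)

def rhoH {n : ℕ} (ξ : Heis n) : ℝ := Real.exp (-(n / 2 : ℝ) * LH ξ) * (rrH ξ / NNH ξ)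

lemma meas_LH {n : ℕ} : Measurable (LH (n := n)) :=
  Real.measurable_log.comp contDiff_NNH.continuous.measurable

lemma meas_rhoH {n : ℕ} : Measurable (rhoH (n := n)) := by
  have h1 := meas_LH (n := n)
  have h2 : Measurable (NNH (n := n)) := contDiff_NNH.continuous.measurable
  have h3 : Measurable (rrH (n := n)) := contDiff_rrH.continuous.measurable
  unfold rhoH
  fun_prop

lemma rhoH_nonneg {n : ℕ} (ξ : Heis n) : 0 ≤ rhoH ξ := by
  have := rrH_nonneg ξ
  have := NNH_nonneg ξ
  unfold rhoH; positivity

def muH (n : ℕ) : Measure (Heis n) := volume.withDensity fun ξ => ENNReal.ofReal (rhoH ξ)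

def nuH (n : ℕ) : Measure ℝ := (muH n).map LH

def dilH {n : ℕ} (l : ℝ) (ξ : Heis n) : Heis n := (l • ξ.1, l • ξ.2.1, (l ^ 2) • ξ.2.2)

lemma map_dilH {n : ℕ} {l : ℝ} (hl : 0 < l) :
    (volume : Measure (Heis n)).map (dilH l) = ENNReal.ofReal ((l ^ (2 * n + 2))⁻¹) • volume := by
  have e : (dilH l : Heis n → Heis n) = Prod.map (fun x => l • x) 
      (Prod.map (fun x => l • x) (fun x => (l ^ 2) • x)) := rfl
  have h1 := Measure.map_addHaar_smul (volume : Measure (Fin n → ℝ)) hl.ne'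
  have h2 := Measure.map_addHaar_smul (volume : Measure ℝ) (pow_pos hl 2).ne'
  have mx : Measurable (fun x : Fin n → ℝ => l • x) := by fun_prop
  have mt : Measurable (fun x : ℝ => (l ^ 2) • x) := by fun_prop
  rw [e]
  change Measure.map _ ((volume : Measure (Fin n → ℝ)).prod
    ((volume : Measure (Fin n → ℝ)).prod (volume : Measure ℝ))) = _
  rw [← Measure.map_prod_map _ _ mx (mx.prodMap mt), ← Measure.map_prod_map _ _ mx mt, h1, h2]
  simp only [Measure.prod_smul_left, Measure.prod_smul_right, smul_smul]
  change _ = _ • ((volume : Measure (Fin n → ℝ)).prod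
    ((volume : Measure (Fin n → ℝ)).prod (volume : Measure ℝ)))
  congr 1
  rw [← ENNReal.ofReal_mul (by positivity), ← ENNReal.ofReal_mul (by positivity)]
  congr 1
  rw [abs_of_pos (by positivity), abs_of_pos (by positivity)]
  simp
  rw [← mul_inv, ← mul_inv]
  congr 1
  ring

lemma meas_dilH {n : ℕ} (l : ℝ) : Measurable (dilH l : Heis n → Heis n) := by
  unfold dilH; fun_prop

lemma rrH_dil {n : ℕ} (l : ℝ) (ξ : Heis n) : rrH (dilH l ξ) = l ^ 2 * rrH ξ := by
  simp [rrH, dilH, mul_pow, mul_add, Finset.mul_sum]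

lemma NNH_dil {n : ℕ} (l : ℝ) (ξ : Heis n) : NNH (dilH l ξ) = l ^ 4 * NNH ξ := by
  simp only [NNH, rrH_dil]
  simp [dilH]; ring

lemma nuH_apply {n : ℕ} {S : Set ℝ} (hS : MeasurableSet S) :
    nuH n S = ∫⁻ ξ : Heis n, (LH ⁻¹' S).indicator (fun ξ => ENNReal.ofReal (rhoH ξ)) ξ := by
  rw [nuH, Measure.map_apply meas_LH hS, muH, withDensity_apply _ (meas_LH hS),
    lintegral_indicator (meas_LH hS)]

lemma nuH_inv (n : ℕ) : (nuH n).IsAddLeftInvariant := by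
  constructor
  intro a
  ext S hS
  have hm : Measurable (fun x : ℝ => a + x) := by fun_prop
  rw [Measure.map_apply hm hS, nuH_apply (hm hS), nuH_apply hS]
  set l := Real.exp (a / 4) with hl
  have lpos : 0 < l := Real.exp_pos _
  have hla : l ^ 4 = Real.exp a := by rw [hl, ← Real.exp_nat_mul]; congr 1; push_cast; ring
  have hln : Real.exp (-(n / 2 : ℝ) * a) = (l ^ (2 * n))⁻¹ := by
    rw [hl, ← Real.exp_nat_mul, ← Real.exp_neg]; congr 1; push_cast; ring
  have hv : (volume : Measure (Heis n)) = ENNReal.ofReal (l ^ (2 * n + 2)) •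
      (volume : Measure (Heis n)).map (dilH l) := by
    rw [map_dilH lpos, smul_smul, ← ENNReal.ofReal_mul (by positivity),
      mul_inv_cancel₀ (by positivity)]
    simp
  have mG : Measurable ((LH ⁻¹' S).indicator (fun ξ : Heis n => ENNReal.ofReal (rhoH ξ))) :=
    (meas_rhoH.ennreal_ofReal).indicator (meas_LH hS)
  have mGd : Measurable (fun η => 
      (LH ⁻¹' S).indicator (fun ξ : Heis n => ENNReal.ofReal (rhoH ξ)) (dilH l η)) :=
    mG.comp (meas_dilH l)
  conv_rhs => rw [hv]
  rw [lintegral_smul_measure, lintegral_map mG (meas_dilH l), smul_eq_mul,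
    ← lintegral_const_mul _ mGd]
  refine lintegral_congr fun ξ => ?_
  classical
  by_cases h : NNH ξ = 0
  · have h1 : rhoH ξ = 0 := by simp [rhoH, h]
    have h2 : rhoH (dilH l ξ) = 0 := by simp [rhoH, NNH_dil, h]
    simp [Set.indicator_apply, h1, h2]
  · have hL : LH (dilH l ξ) = a + LH ξ := by
      rw [LH, NNH_dil, Real.log_mul (by positivity) h, hla, Real.log_exp, LH]
    have hR : rhoH (dilH l ξ) = (l ^ (2 * n + 2))⁻¹ * rhoH ξ := by
      rw [rhoH, hL, rrH_dil, NNH_dil, mul_add, Real.exp_add, hln, rhoH]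
      field_simp
      ring
    simp only [Set.indicator_apply, Set.mem_preimage, hL, hR]
    split_ifs
    · rw [← ENNReal.ofReal_mul (by positivity), ← mul_assoc, mul_inv_cancel₀ (by positivity),
        one_mul]
    · simp

lemma nuH_fin (n : ℕ) : IsFiniteMeasureOnCompacts (nuH n) := by
  constructor
  intro K hK
  obtain ⟨a, ha⟩ := hK.isBounded.subset_closedBall 0
  have hKa : ∀ s ∈ K, |s| ≤ a := fun s hs => by simpa using ha hs
  rw [nuH_apply hK.measurableSet, lintegral_indicator (meas_LH hK.measurableSet)]
  set M := Real.exp ((n / 2 : ℝ) * a) * (1 + Real.exp a)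
  have hsub : (LH ⁻¹' K : Set (Heis n)) ⊆ Metric.closedBall 0 (Real.exp a + 1) := by
    intro ξ hξ
    have h1 := (abs_le.1 (hKa _ hξ)).2
    have h2 := norm_le_NN ξ
    have h3 : NNH ξ ≤ Real.exp a := by
      rcases (NNH_nonneg ξ).eq_or_lt with h | h
      · rw [← h]; positivity
      · exact (Real.log_le_iff_le_exp h).1 h1
    simp; linarith
  calc ∫⁻ ξ in (LH ⁻¹' K : Set (Heis n)), ENNReal.ofReal (rhoH ξ) 
      ≤ ∫⁻ ξ in (LH ⁻¹' K : Set (Heis n)), ENNReal.ofReal M := by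
        refine setLIntegral_mono (by fun_prop) fun ξ hξ => ENNReal.ofReal_le_ofReal ?_
        have h1 := (abs_le.1 (hKa _ hξ)).1
        rcases (NNH_nonneg ξ).eq_or_lt with h | h
        · have : rhoH ξ = 0 := by simp [rhoH, ← h]
          rw [this]; positivity
        · have hr := rrH_nonneg ξ
          refine mul_le_mul ?_ ?_ (by positivity) (by positivity)
          · refine Real.exp_le_exp.2 ?_
            have hn : (0 : ℝ) ≤ n := by positivity
            nlinarith
          · have h3 : Real.exp (-a) ≤ NNH ξ := (Real.le_log_iff_exp_le h).1 h1
            have h4 : 1 ≤ Real.exp a * NNH ξ := by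
              calc (1:ℝ) = Real.exp a * Real.exp (-a) := by rw [← Real.exp_add]; simp
                _ ≤ _ := by gcongr
            rw [div_le_iff₀ h]
            have h5 : rrH ξ ≤ NNH ξ + 1 := by
              unfold NNH; nlinarith [sq_nonneg (rrH ξ - 1/2), sq_nonneg ξ.2.2]
            linarith
    _ = ENNReal.ofReal M * volume (LH ⁻¹' K : Set (Heis n)) := by simp
    _ < ⊤ := ENNReal.mul_lt_top ENNReal.ofReal_lt_top
        ((measure_mono hsub).trans_lt (isCompact_closedBall _ _).measure_lt_top)

lemma nuH_ne {n : ℕ} (hn : 0 < n) : nuH n ≠ 0 := by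
  intro h0
  have h1 : nuH n Set.univ = 0 := by simp [h0]
  rw [nuH_apply MeasurableSet.univ, Set.preimage_univ, Set.indicator_univ,
    lintegral_eq_zero_iff meas_rhoH.ennreal_ofReal] at h1
  have h2 : (volume : Measure (Heis n)) {ξ | rrH ξ ≠ 0} = 0 := by
    refine measure_mono_null ?_ (ae_iff.1 h1)
    intro ξ hξ
    simp only [Set.mem_ofPred_eq, Pi.zero_apply, ENNReal.ofReal_eq_zero, not_le] at hξ ⊢
    have hr : 0 < rrH ξ := lt_of_le_of_ne (rrH_nonneg ξ) (Ne.symm hξ)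
    have hN : 0 < NNH ξ := by unfold NNH; positivity
    unfold rhoH; positivity
  have ho : IsOpen {ξ : Heis n | rrH ξ ≠ 0} := isOpen_ne_fun contDiff_rrH.continuous (by fun_prop)
  have hne : {ξ : Heis n | rrH ξ ≠ 0}.Nonempty := by
    refine ⟨(fun _ => 1, 0, 0), ?_⟩
    simp [rrH, hn.ne']
  exact (ho.measure_pos volume hne).ne' h2

lemma exists_c {n : ℕ} (hn : 0 < n) : ∃ c : ℝ, 0 < c ∧ ∀ h : ℝ → ℝ, Continuous h →
    ∫ ξ : Heis n, h (LH ξ) * rhoH ξ = c * ∫ s, h s := by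
  have := nuH_inv n
  have := nuH_fin n
  have hk := Measure.isAddLeftInvariant_eq_smul (nuH n) (volume : Measure ℝ)
  set k := Measure.addHaarScalarFactor (nuH n) (volume : Measure ℝ)
  have hk0 : k ≠ 0 := by
    intro h
    rw [h, zero_smul] at hk
    exact nuH_ne hn hk
  refine ⟨k, by positivity, fun h hc => ?_⟩
  have h1 : ∫ s, h s ∂(nuH n) = k * ∫ s, h s := by
    rw [hk, integral_smul_nnreal_measure]; rfl
  rw [← h1, nuH, integral_map meas_LH.aemeasurable hc.aestronglyMeasurable, muH,
    integral_withDensity_eq_integral_toReal_smul meas_rhoH.ennreal_ofReal (by simp)]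
  refine integral_congr_ae (Filter.Eventually.of_forall fun ξ => ?_)
  simp [ENNReal.toReal_ofReal (rhoH_nonneg ξ), mul_comm]

lemma test_radial {n : ℕ} {Φ : ℝ → ℝ} (hΦ : ContDiff ℝ (⊤ : ℕ∞) Φ) (b : ℝ)
    (h0 : ∀ s ≤ 0, Φ s = 0) (hb : ∀ s ≥ b, Φ s = 0) :
    IsTestAwayZero (fun ξ : Heis n => Φ (LH ξ)) ∧
    ∀ ξ : Heis n, ∑ j, (XH j (fun ξ : Heis n => Φ (LH ξ)) ξ ^ 2 +
      YH j (fun ξ : Heis n => Φ (LH ξ)) ξ ^ 2) = 16 * deriv Φ (LH ξ) ^ 2 * (rrH ξ / NNH ξ) := by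
  have hz : (fun ξ : Heis n => Φ (LH ξ)) =ᶠ[nhds 0] 0 := by
    have : ∀ᶠ ξ : Heis n in nhds 0, NNH ξ < 1 :=
      contDiff_NNH.continuous.continuousAt.eventually_lt continuousAt_const (by simp [NNH_zero])
    filter_upwards [this] with ξ hξ
    exact h0 _ (Real.log_nonpos (NNH_nonneg ξ) hξ.le)
  refine ⟨⟨?_, ?_, ?_⟩, ?_⟩
  · rw [contDiff_iff_contDiffAt]
    intro ξ
    by_cases h : NNH ξ = 0
    · have := NNH_eq_zero h
      subst this
      exact (contDiffAt_const (c := (0 : ℝ))).congr_of_eventuallyEq hz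
    · exact hΦ.contDiffAt.comp ξ (contDiff_NNH.contDiffAt.log h)
  · refine HasCompactSupport.intro (isCompact_closedBall 0 (Real.exp b + 1)) fun ξ hξ => hb _ ?_
    simp at hξ
    have h1 := norm_le_NN ξ
    have h2 : Real.exp b < NNH ξ := by linarith
    exact (Real.le_log_iff_exp_le ((Real.exp_pos b).trans h2)).2 h2.le
  · exact notMem_tsupport_iff_eventuallyEq.2 hz
  · intro ξ
    by_cases h : NNH ξ = 0
    · have := NNH_eq_zero h
      subst this
      simp [XH, YH, hz.fderiv_eq, h]
    · have hd : HasFDerivAt (fun ξ : Heis n => Φ (LH ξ)) _ ξ :=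
        ((hΦ.differentiable (by simp) (LH ξ)).hasDerivAt).comp_hasFDerivAt ξ
          ((has_NN ξ).log h)
      have hX : ∀ j, XH j (fun ξ : Heis n => Φ (LH ξ)) ξ =
          deriv Φ (LH ξ) * ((NNH ξ)⁻¹ * (4 * AH j ξ)) := fun j => by
        rw [← XH_NN, XH_eq, XH_eq, hd.fderiv, (has_NN ξ).fderiv]
        simp; ring
      have hY : ∀ j, YH j (fun ξ : Heis n => Φ (LH ξ)) ξ =
          deriv Φ (LH ξ) * ((NNH ξ)⁻¹ * (4 * BH j ξ)) := fun j => by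
        rw [← YH_NN, YH_eq, YH_eq, hd.fderiv, (has_NN ξ).fderiv]
        simp; ring
      calc _ = ∑ j, 16 * deriv Φ (LH ξ) ^ 2 * (NNH ξ)⁻¹ ^ 2 * (AH j ξ ^ 2 + BH j ξ ^ 2) := by
            refine Finset.sum_congr rfl fun j _ => ?_
            rw [hX, hY]; ring
        _ = _ := by
            rw [← Finset.mul_sum, sum_AB]
            field_simp

lemma part_two {n : ℕ} (hn : 0 < n) {C : ℝ} (hC : (n : ℝ) ^ 2 < C) :
    ∃ f : Heis n → ℝ, IsTestAwayZero f ∧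
      ∫ ξ : Heis n, ∑ j, (XH j f ξ ^ 2 + YH j f ξ ^ 2) <
        C * ∫ ξ : Heis n, rrH ξ / NNH ξ * f ξ ^ 2 := by
  obtain ⟨c, hc, hint⟩ := exists_c hn
  let φ : ContDiffBump (2 : ℝ) := ⟨1 / 2, 1, by norm_num, by norm_num⟩
  have φs : ContDiff ℝ (⊤ : ℕ∞) φ := φ.contDiff
  have φd : Differentiable ℝ φ := φs.differentiable (by simp)
  have φc : Continuous φ := φs.continuous
  have φdc : Continuous (deriv φ) := φs.continuous_deriv (by simp)
  have φcs : HasCompactSupport φ := φ.hasCompactSupport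
  have φdcs : HasCompactSupport (deriv φ) := φcs.deriv
  set A := ∫ s, φ s ^ 2 with hA
  set E := ∫ s, deriv φ s * φ s with hE
  set D := ∫ s, deriv φ s ^ 2 with hD
  have iA : Integrable (fun s => φ s ^ 2) := by
    refine Continuous.integrable_of_hasCompactSupport (by fun_prop) ?_
    simp only [pow_two]; exact φcs.mul_right
  have iE : Integrable (fun s => deriv φ s * φ s) :=
    Continuous.integrable_of_hasCompactSupport (by fun_prop) φcs.mul_left
  have iD : Integrable (fun s => deriv φ s ^ 2) := by
    refine Continuous.integrable_of_hasCompactSupport (by fun_prop) ?_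
    simp only [pow_two]; exact φdcs.mul_right
  have Apos : 0 < A := by
    refine Continuous.integral_pos_of_hasCompactSupport_nonneg_nonzero (x := 2) (by fun_prop) ?_
      (fun s => sq_nonneg _) ?_
    · simp only [pow_two]; exact φcs.mul_right
    · have : φ 2 = 1 := φ.one_of_mem_closedBall (by simp [φ])
      simp [this]
  have hB : ∀ e : ℝ, ∫ s, (4 * e * deriv φ s - n * φ s) ^ 2 =
      16 * e ^ 2 * D - 8 * n * e * E + n ^ 2 * A := fun e => by
    have : ∀ s, (4 * e * deriv φ s - n * φ s) ^ 2 =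
      16 * e ^ 2 * (deriv φ s ^ 2) - 8 * n * e * (deriv φ s * φ s) + n ^ 2 * (φ s ^ 2) :=
      fun s => by ring
    simp only [this]
    have iS : Integrable (fun s => 16 * e ^ 2 * (deriv φ s ^ 2) - 8 * n * e * (deriv φ s * φ s)) :=
      (iD.const_mul _).sub (iE.const_mul _)
    rw [integral_add iS (iA.const_mul _),
      integral_sub (iD.const_mul _) (iE.const_mul _)]
    simp only [integral_const_mul, hA, hE, hD]
  obtain ⟨e, he, hlt⟩ : ∃ e : ℝ, 0 < e ∧ 16 * e ^ 2 * D - 8 * n * e * E + n ^ 2 * A < C * A := by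
    have hcont : Continuous fun e : ℝ => 16 * e ^ 2 * D - 8 * n * e * E + n ^ 2 * A := by fun_prop
    have hev := hcont.continuousAt.eventually_lt (x₀ := (0 : ℝ)) (continuousAt_const (y := C * A))
      (by simpa using mul_lt_mul_of_pos_right hC Apos)
    obtain ⟨e, h1, h2⟩ := ((hev.filter_mono nhdsWithin_le_nhds).and
      (self_mem_nhdsWithin : Set.Ioi (0:ℝ) ∈ nhdsWithin 0 (Set.Ioi 0))).exists
    exact ⟨e, h2, h1⟩
  set Φ : ℝ → ℝ := fun s => Real.exp (-(n / 4 : ℝ) * s) * φ (e * s) with hΦ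
  have sΦ : ContDiff ℝ (⊤ : ℕ∞) Φ := by
    have : ContDiff ℝ (⊤ : ℕ∞) fun s : ℝ => φ (e * s) := φs.comp (by fun_prop)
    fun_prop
  have φ0 : ∀ s, s ≤ 1 ∨ 3 ≤ s → φ s = 0 := fun s hs => by
    refine φ.zero_of_le_dist ?_
    change 1 ≤ dist s 2
    rw [Real.dist_eq, le_abs]
    rcases hs with h | h
    · right; linarith
    · left; linarith
  have dΦ : ∀ s, deriv Φ s = Real.exp (-(n / 4 : ℝ) * s) * 
      (e * deriv φ (e * s) - n / 4 * φ (e * s)) := fun s => by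
    have h1 : HasDerivAt (fun s : ℝ => φ (e * s)) (deriv φ (e * s) * e) s := by
      have h2 : HasDerivAt (fun s : ℝ => e * s) e s := by simpa using (hasDerivAt_id s).const_mul e
      exact (φd (e * s)).hasDerivAt.comp s h2
    have h3 : HasDerivAt (fun s : ℝ => Real.exp (-(n / 4 : ℝ) * s))
        (Real.exp (-(n / 4 : ℝ) * s) * (-(n / 4 : ℝ))) s := by
      have h2 : HasDerivAt (fun s : ℝ => -(n / 4 : ℝ) * s) (-(n / 4 : ℝ)) s := by
        simpa using (hasDerivAt_id s).const_mul (-(n / 4 : ℝ))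
      exact h2.exp
    rw [(h3.fun_mul h1).deriv]; ring
  obtain ⟨ht, hg⟩ := test_radial (n := n) sΦ (3 / e)
    (fun s hs => by
      have : φ (e * s) = 0 := φ0 _ (Or.inl (by nlinarith))
      simp [hΦ, this])
    (fun s hs => by
      have : φ (e * s) = 0 := φ0 _ (Or.inr (by rwa [ge_iff_le, div_le_iff₀' he] at hs))
      simp [hΦ, this])
  refine ⟨_, ht, ?_⟩
  have hexp : ∀ s : ℝ, Real.exp (-(n / 2 : ℝ) * s) = Real.exp (-(n / 4 : ℝ) * s) ^ 2 := fun s => by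
    rw [← Real.exp_nat_mul]; congr 1; push_cast; ring
  have I1 : ∫ ξ : Heis n, rrH ξ / NNH ξ * Φ (LH ξ) ^ 2 = c * (e⁻¹ * A) := by
    have : ∀ ξ : Heis n, rrH ξ / NNH ξ * Φ (LH ξ) ^ 2 = φ (e * LH ξ) ^ 2 * rhoH ξ := fun ξ => by
      simp only [hΦ, rhoH, hexp]; ring
    simp only [this]
    rw [hint (fun s => φ (e * s) ^ 2) (by fun_prop),
      Measure.integral_comp_mul_left (fun s => φ s ^ 2) e, abs_of_pos (by positivity)]
    rfl
  have I2 : ∫ ξ : Heis n, 16 * deriv Φ (LH ξ) ^ 2 * (rrH ξ / NNH ξ) =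
      c * (e⁻¹ * (16 * e ^ 2 * D - 8 * n * e * E + n ^ 2 * A)) := by
    have : ∀ ξ : Heis n, 16 * deriv Φ (LH ξ) ^ 2 * (rrH ξ / NNH ξ) =
        (4 * e * deriv φ (e * LH ξ) - n * φ (e * LH ξ)) ^ 2 * rhoH ξ := fun ξ => by
      simp only [dΦ, rhoH, hexp]; ring
    simp only [this]
    rw [hint (fun s => (4 * e * deriv φ (e * s) - n * φ (e * s)) ^ 2) (by fun_prop),
      Measure.integral_comp_mul_left (fun s => (4 * e * deriv φ s - n * φ s) ^ 2) e,
      abs_of_pos (by positivity), hB]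
    rfl
  simp only [hg]
  rw [I1, I2]
  have : c * (e⁻¹ * (16 * e ^ 2 * D - 8 * n * e * E + n ^ 2 * A)) < c * (e⁻¹ * (C * A)) := by
    gcongr
  linarith

/-- Corollary 3.4 (3): the weighted `L²` Hardy inequality on `ℍⁿ`
with sharp constant `((Q − 2)/2)²`. -/
theorem L2_hardy_Heisenberg_sharp
    (n : ℕ) (hQ : (2 : ℝ) < 2 * n + 2) :
    (∀ f : Heis n → ℝ, IsTestAwayZero f →
      ((2 * n + 2 - 2 : ℝ) / 2) ^ 2 *
          ∫ ξ : Heis n, zNorm ξ ^ 2 / dH ξ ^ 2 * (|f ξ| ^ 2 / dH ξ ^ 2) ≤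
        ∫ ξ : Heis n, hNorm (hGrad f ξ) ^ 2) ∧
    (∀ C' : ℝ, ((2 * n + 2 - 2 : ℝ) / 2) ^ 2 < C' →
      ∃ f : Heis n → ℝ, IsTestAwayZero f ∧
        ¬ (C' * ∫ ξ : Heis n, zNorm ξ ^ 2 / dH ξ ^ 2 * (|f ξ| ^ 2 / dH ξ ^ 2) ≤
            ∫ ξ : Heis n, hNorm (hGrad f ξ) ^ 2)) := by
  have hn : 0 < n := by
    rcases Nat.eq_zero_or_pos n with h | h
    · subst h; simp at hQ
    · exact h
  have hcn : ((2 * n + 2 - 2 : ℝ) / 2) = n := by ring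
  simp only [weight_eq, hNorm_sq, hcn]
  refine ⟨fun f hf => part_one hf, fun C' hC => ?_⟩
  obtain ⟨f, hf, h⟩ := part_two hn hC
  exact ⟨f, hf, not_le.2 h⟩
end
end
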